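/- There exist at least 168 pairwise non-isomorphic 2-(65,5,1) designs each of which is isomorphic to the design associated to a unital in some projective plane of order 16. -/

import Mathlib

/-- A finite projective plane: any two distinct points lie on a unique common line,
any two distinct lines meet in a unique common point, and there exist four points
no three of which are collinear. -/
structure ProjPlane where
  Point : Type
  Line : Type
  Incid : Point → Line → Prop
  finite_point : Finite Point
  finite_line : Finite Line
  exists_unique_line : ∀ p q : Point, p ≠ q → ∃! l : Line, Incid p l ∧ Incid q l
  exists_unique_point : ∀ l m : Line, l ≠ m → ∃! p : Point, Incid p l ∧ Incid p m
  nondegenerate : ∃ f : Fin 4 → Point, Function.Injective f ∧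
    ∀ l : Line, ∀ i j k : Fin 4, i ≠ j → i ≠ k → j ≠ k →
      ¬(Incid (f i) l ∧ Incid (f j) l ∧ Incid (f k) l)

/-- The plane has order `n`: every line contains exactly `n + 1` points. -/
def ProjPlane.HasOrder (Pl : ProjPlane) (n : ℕ) : Prop :=
  ∀ l : Pl.Line, {p : Pl.Point | Pl.Incid p l}.ncard = n + 1

/-- A unital in a plane of order `q ^ 2`: a set of `q ^ 3 + 1` points meeting every
line in exactly `1` or exactly `q + 1` points. -/
def ProjPlane.IsUnital (Pl : ProjPlane) (q : ℕ) (U : Set Pl.Point) : Prop :=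
  U.ncard = q ^ 3 + 1 ∧
    ∀ l : Pl.Line,
      (U ∩ {p | Pl.Incid p l}).ncard = 1 ∨ (U ∩ {p | Pl.Incid p l}).ncard = q + 1

/-- The blocks of the design associated to a unital: the intersections of the unital
with its secant lines, viewed as subsets of the unital. -/
def ProjPlane.unitalBlocks (Pl : ProjPlane) (q : ℕ) (U : Set Pl.Point) : Set (Set ↥U) :=
  {b | ∃ l : Pl.Line, (U ∩ {p | Pl.Incid p l}).ncard = q + 1 ∧
        b = {x : ↥U | Pl.Incid x.1 l}}

/-- An isomorphism of designs (given by their block families): a bijection between the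
point sets mapping every block to a block. -/
def DesignIso {α β : Type*} (B₁ : Set (Set α)) (B₂ : Set (Set β)) : Prop :=
  ∃ f : α ≃ β, ∀ b ∈ B₁, ⇑f '' b ∈ B₂


/-- A 2-(65,5,1) (Steiner) design on the point set `Fin 65`, given by its block family:
every block has 5 points and every pair of distinct points lies in exactly one block. -/
def IsSteinerDesign65 (B : Set (Set (Fin 65))) : Prop :=
  (∀ b ∈ B, b.ncard = 5) ∧
    ∀ x y : Fin 65, x ≠ y → ∃! b, b ∈ B ∧ x ∈ b ∧ y ∈ b

/-!
A set of `n ^ 2 + n + 1` points and as many lines, with `n + 1` lines through each point and a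
unique line through two points, is a projective plane of order `n`. Hence a plane of order 16 is
given by the intercepts of the lines through its affine points, and evaluation verifies seventeen
such planes and 168 unitals in them.

The designs of the unitals are told apart by the number of triples `(x, l, m)` of a point and two
blocks such that an odd number of blocks through `x` meet both `l` and `m`. Its evaluation codes
the matrix of the pairs of meeting blocks as one large natural number: the outer product of a column
and a row of the matrix is then the product of two numbers, parities add up by exclusive or, and a
remainder modulo `2 ^ k - 1` counts the binary ones.
-/

section ProjectivePlanes

variable {P L : Type}

/-- The axioms of a finite linear space with as many points, lines and lines per point as a
projective plane of order `n`; lines are not assumed to meet. -/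
structure IsPlaneLike (n : ℕ) (I : P → L → Prop) : Prop where
  one_lt : 1 < n
  card_point : Nat.card P = n ^ 2 + n + 1
  card_line : Nat.card L = n ^ 2 + n + 1
  ncard_pencil : ∀ p, {l | I p l}.ncard = n + 1
  existsUnique_line : ∀ p q, p ≠ q → ∃! l, I p l ∧ I q l

theorem not_three_of_pairs {X : Fin 4 → Prop} (h₀₁ : X 0 → X 1 → ¬ X 2 ∧ ¬ X 3)
    (h₂₃ : X 2 → X 3 → ¬ X 0 ∧ ¬ X 1) (i j k : Fin 4) (hij : i ≠ j) (hik : i ≠ k) (hjk : j ≠ k) :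
    ¬ (X i ∧ X j ∧ X k) := by
  fin_cases i <;> fin_cases j <;> fin_cases k <;> simp_all <;> tauto

namespace IsPlaneLike

variable {n : ℕ} {I : P → L → Prop}

theorem finite_point (h : IsPlaneLike n I) : Finite P :=
  Nat.finite_of_card_ne_zero (by rw [h.card_point]; omega)

theorem finite_line (h : IsPlaneLike n I) : Finite L :=
  Nat.finite_of_card_ne_zero (by rw [h.card_line]; omega)

theorem eq_or_eq (h : IsPlaneLike n I) {p q : P} {l m : L} (hpl : I p l) (hql : I q l)
    (hpm : I p m) (hqm : I q m) : p = q ∨ l = m :=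
  or_iff_not_imp_left.2 fun hpq => (h.existsUnique_line p q hpq).unique ⟨hpl, hql⟩ ⟨hpm, hqm⟩

theorem exists_line_not_incident (h : IsPlaneLike n I) (p : P) : ∃ l, ¬ I p l := by
  by_contra! hall
  have hcard := h.ncard_pencil p
  rw [Set.eq_univ_of_forall (s := {l | I p l}) hall, Set.ncard_univ, h.card_line] at hcard
  nlinarith [h.one_lt]

-- If all points were on `l`, second lines through the points would be pairwise distinct and
-- different from `l`, giving more lines than points.
theorem exists_point_not_incident (h : IsPlaneLike n I) (l : L) : ∃ p, ¬ I p l := by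
  by_contra! hall
  have := h.finite_line
  have hsecond (p : P) : ∃ m, I p m ∧ m ≠ l := by
    have hcard : 1 < {m | I p m}.ncard := by
      rw [h.ncard_pencil]
      exact Nat.lt_succ_of_lt h.one_lt
    exact Set.exists_ne_of_one_lt_ncard hcard l
  choose m hm hml using hsecond
  have hinj : Function.Injective m := fun p q hpq =>
    (h.eq_or_eq (hm p) (hpq ▸ hm q) (hall p) (hall q)).resolve_right (hml p)
  obtain ⟨p, hp⟩ := ((Nat.bijective_iff_injective_and_card m).2
    ⟨hinj, h.card_point.trans h.card_line.symm⟩).2 l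
  exact hml p hp

theorem existsUnique_point_and_ncard_line (h : IsPlaneLike n I) :
    (∀ l m, l ≠ m → ∃! p, I p l ∧ I p m) ∧ ∀ l, {p | I p l}.ncard = n + 1 := by
  have := h.finite_point
  have := h.finite_line
  have := Fintype.ofFinite P
  have := Fintype.ofFinite L
  have hcard : Fintype.card P = Fintype.card L := by
    rw [← Nat.card_eq_fintype_card, ← Nat.card_eq_fintype_card, h.card_point, h.card_line]
  let _ : Membership P L := ⟨fun l p => I p l⟩
  let _ : Configuration.HasLines P L :=
    { exists_point := h.exists_point_not_incident
      exists_line := h.exists_line_not_incident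
      eq_or_eq := h.eq_or_eq
      mkLine := fun {p q} hpq => (h.existsUnique_line p q hpq).choose
      mkLine_ax := fun {p q} hpq => (h.existsUnique_line p q hpq).choose_spec.1 }
  let _ : Configuration.HasPoints P L := Configuration.HasLines.hasPoints hcard
  refine ⟨Configuration.HasPoints.existsUnique_point P L, fun l => ?_⟩
  obtain ⟨p, hp⟩ := h.exists_point_not_incident l
  exact (Configuration.HasLines.lineCount_eq_pointCount hcard hp).symm.trans (h.ncard_pencil p)

theorem exists_lines_ne (h : IsPlaneLike n I) : ∃ l m : L, l ≠ m := by
  have := h.finite_line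
  have hcard : 1 < Nat.card L := by
    rw [h.card_line]
    nlinarith [h.one_lt]
  exact (Finite.one_lt_card_iff_nontrivial.1 hcard).exists_pair_ne

theorem exists_two_points_ne (h : IsPlaneLike n I) (l : L) (o : P) :
    ∃ a b, I a l ∧ I b l ∧ a ≠ o ∧ b ≠ o ∧ a ≠ b := by
  have := h.finite_point
  have hcard : 1 < ({p | I p l} \ {o}).ncard := by
    have := h.existsUnique_point_and_ncard_line.2 l
    have := Set.pred_ncard_le_ncard_sdiff_singleton {p | I p l} o
    have := h.one_lt
    omega
  obtain ⟨a, b, ha, hb, hab⟩ := (Set.one_lt_ncard_iff).1 hcard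
  exact ⟨a, b, ha.1, hb.1, ha.2, hb.2, hab⟩

/-- Two points on each of two lines, all different from the common point of the lines, form a
quadrangle. -/
theorem exists_quadrangle (h : IsPlaneLike n I) : ∃ f : Fin 4 → P, Function.Injective f ∧
    ∀ l, ∀ i j k : Fin 4, i ≠ j → i ≠ k → j ≠ k → ¬(I (f i) l ∧ I (f j) l ∧ I (f k) l) := by
  obtain ⟨l, m, hlm⟩ := h.exists_lines_ne
  obtain ⟨o, ⟨hol, hom⟩, ho⟩ := h.existsUnique_point_and_ncard_line.1 l m hlm
  obtain ⟨a, b, hal, hbl, hao, hbo, hab⟩ := h.exists_two_points_ne l o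
  obtain ⟨c, d, hcm, hdm, hco, hdo, hcd⟩ := h.exists_two_points_ne m o
  have hmeet {p : P} (hp : p ≠ o) (hpl : I p l) : ¬ I p m := fun hpm => hp (ho p ⟨hpl, hpm⟩)
  have hne {p q : P} (hp : p ≠ o) (hpl : I p l) (hqm : I q m) : p ≠ q :=
    fun heq => hmeet hp hpl (heq ▸ hqm)
  refine ⟨![a, b, c, d], ?_, fun k => not_three_of_pairs ?_ ?_⟩
  · have := hne hao hal hcm
    have := hne hao hal hdm
    have := hne hbo hbl hcm
    have := hne hbo hbl hdm
    simp only [Function.Injective, Fin.forall_fin_succ]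
    simp [*, Ne.symm]
  · intro hak hbk
    obtain rfl := (h.eq_or_eq hak hbk hal hbl).resolve_left hab
    exact ⟨fun hc => hmeet hco hc hcm, fun hd => hmeet hdo hd hdm⟩
  · intro hck hdk
    obtain rfl := (h.eq_or_eq hck hdk hcm hdm).resolve_left hcd
    exact ⟨hmeet hao hal, hmeet hbo hbl⟩

/-- The projective plane given by a plane-like incidence relation. -/
def toProjPlane (h : IsPlaneLike n I) : ProjPlane where
  Point := P
  Line := L
  Incid := I
  finite_point := h.finite_point
  finite_line := h.finite_line
  exists_unique_line := h.existsUnique_line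
  exists_unique_point := h.existsUnique_point_and_ncard_line.1
  nondegenerate := h.exists_quadrangle

theorem toProjPlane_hasOrder (h : IsPlaneLike n I) : h.toProjPlane.HasOrder n :=
  h.existsUnique_point_and_ncard_line.2

end IsPlaneLike

end ProjectivePlanes

section Designs

variable {α β P P' L L' : Type*}

/-- The number of triples `(x, l, m)` of a point and two lines such that an odd number of lines
through `x` meet both `l` and `m`. It is used to tell designs apart. -/
noncomputable def oddTransversalCount (I : P → L → Prop) : ℕ :=
  Nat.card {t : P × L × L // Odd (Nat.card
    {b // I t.1 b ∧ (∃ x, I x b ∧ I x t.2.1) ∧ ∃ x, I x b ∧ I x t.2.2})}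

theorem oddTransversalCount_congr {I : P → L → Prop} {I' : P' → L' → Prop} (f : P ≃ P')
    (g : L ≃ L') (h : ∀ p l, I p l ↔ I' (f p) (g l)) :
    oddTransversalCount I = oddTransversalCount I' := by
  have hmeet (b l : L) : (∃ x, I x b ∧ I x l) ↔ ∃ x, I' x (g b) ∧ I' x (g l) := by
    simp_rw [h]
    exact (f.surjective.exists (p := fun x => I' x (g b) ∧ I' x (g l))).symm
  refine Nat.card_congr ((f.prodCongr (g.prodCongr g)).subtypeEquiv fun t => ?_)
  rw [Nat.card_congr (g.subtypeEquiv fun b => ?_)]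
  exact and_congr (h _ _) (and_congr (hmeet _ _) (hmeet _ _))

/-- A linear space: blocks have at least two points and two distinct points lie in exactly one
block. -/
structure IsLinearSpace (B : Set (Set α)) : Prop where
  nontrivial : ∀ b ∈ B, b.Nontrivial
  existsUnique_block : ∀ x y, x ≠ y → ∃! b, b ∈ B ∧ x ∈ b ∧ y ∈ b

theorem IsSteinerDesign65.isLinearSpace {B : Set (Set (Fin 65))} (h : IsSteinerDesign65 B) :
    IsLinearSpace B where
  nontrivial b hb := Set.one_lt_ncard_iff_nontrivial.1 (by rw [h.1 b hb]; norm_num)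
  existsUnique_block := h.2

theorem DesignIso.exists_equiv_image_mem_iff {B₁ : Set (Set α)} {B₂ : Set (Set β)}
    (h₁ : IsLinearSpace B₁) (h₂ : IsLinearSpace B₂) (h : DesignIso B₁ B₂) :
    ∃ f : α ≃ β, ∀ b, f '' b ∈ B₂ ↔ b ∈ B₁ := by
  obtain ⟨f, hf⟩ := h
  refine ⟨f, fun b => ⟨fun hb => ?_, hf b⟩⟩
  obtain ⟨_, ⟨x, hx, rfl⟩, _, ⟨y, hy, rfl⟩, hxy⟩ := h₂.nontrivial _ hb
  obtain ⟨c, ⟨hc, hxc, hyc⟩, -⟩ := h₁.existsUnique_block x y (ne_of_apply_ne f hxy)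
  have himage : f '' b = f '' c := (h₂.existsUnique_block _ _ hxy).unique
    ⟨hb, Set.mem_image_of_mem f hx, Set.mem_image_of_mem f hy⟩
    ⟨hf c hc, Set.mem_image_of_mem f hxc, Set.mem_image_of_mem f hyc⟩
  rwa [f.injective.image_injective himage]

theorem DesignIso.oddTransversalCount_eq {B₁ : Set (Set α)} {B₂ : Set (Set β)}
    (h₁ : IsLinearSpace B₁) (h₂ : IsLinearSpace B₂) (h : DesignIso B₁ B₂) :
    oddTransversalCount (fun x (b : B₁) => x ∈ b.1) =
      oddTransversalCount (fun x (b : B₂) => x ∈ b.1) := by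
  obtain ⟨f, hf⟩ := h.exists_equiv_image_mem_iff h₁ h₂
  exact oddTransversalCount_congr f ((Equiv.Set.congr f).subtypeEquiv fun b => (hf b).symm)
    fun x b => (f.injective.mem_set_image (s := b.1)).symm

end Designs

section Unitals

variable {Pl : ProjPlane} {q : ℕ} {U : Set Pl.Point}

theorem ncard_of_mem_unitalBlocks {b : Set U} (hb : b ∈ Pl.unitalBlocks q U) :
    b.ncard = q + 1 := by
  obtain ⟨l, hl, rfl⟩ := hb
  rw [← hl, ← Set.ncard_image_of_injective _ Subtype.val_injective]
  congr 1
  ext p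
  simp [and_comm]

theorem nontrivial_of_mem_unitalBlocks (hq : 0 < q) {b : Set U} (hb : b ∈ Pl.unitalBlocks q U) :
    b.Nontrivial := by
  have hcard := ncard_of_mem_unitalBlocks hb
  have : Finite b := Set.finite_of_ncard_ne_zero (by omega)
  exact Set.one_lt_ncard_iff_nontrivial.1 (by omega)

theorem ProjPlane.IsUnital.isLinearSpace (hU : Pl.IsUnital q U) (hq : 0 < q) :
    IsLinearSpace (Pl.unitalBlocks q U) where
  nontrivial _ := nontrivial_of_mem_unitalBlocks hq
  existsUnique_block x y hxy := by
    have hxy' : x.1 ≠ y.1 := Subtype.coe_ne_coe.2 hxy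
    obtain ⟨l, ⟨hxl, hyl⟩, hl⟩ := Pl.exists_unique_line x y hxy'
    have hsecant : (U ∩ {p | Pl.Incid p l}).ncard = q + 1 := by
      refine (hU.2 l).resolve_left fun hone => ?_
      obtain ⟨p, hp⟩ := Set.ncard_eq_one.1 hone
      have hpx : x.1 = p := hp.le ⟨x.2, hxl⟩
      have hpy : y.1 = p := hp.le ⟨y.2, hyl⟩
      exact hxy' (hpx.trans hpy.symm)
    refine ⟨_, ⟨⟨l, hsecant, rfl⟩, hxl, hyl⟩, ?_⟩
    rintro _ ⟨⟨m, -, rfl⟩, hxm, hym⟩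
    rw [hl m ⟨hxm, hym⟩]

theorem ProjPlane.IsUnital.exists_isSteinerDesign65 (hU : Pl.IsUnital 4 U) :
    ∃ D, IsSteinerDesign65 D ∧ DesignIso D (Pl.unitalBlocks 4 U) := by
  have hcard : Nat.card U = 65 := hU.1
  have : Finite U := Nat.finite_of_card_ne_zero (by omega)
  let e : Fin 65 ≃ U := (Finite.equivFinOfCardEq hcard).symm
  refine ⟨{d | e '' d ∈ Pl.unitalBlocks 4 U}, ⟨fun d hd => ?_, fun x y hxy => ?_⟩, e, fun _ => id⟩
  · rw [← Set.ncard_image_of_injective d e.injective]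
    exact ncard_of_mem_unitalBlocks hd
  · obtain ⟨b, ⟨hb, hxb, hyb⟩, hunique⟩ := (hU.isLinearSpace four_pos).existsUnique_block _ _
      (e.injective.ne hxy)
    refine ⟨e ⁻¹' b, ⟨?_, hxb, hyb⟩, fun d ⟨hd, hxd, hyd⟩ => ?_⟩
    · rwa [Set.mem_ofPred_eq, e.image_preimage]
    · rw [← hunique _ ⟨hd, Set.mem_image_of_mem e hxd, Set.mem_image_of_mem e hyd⟩,
        e.preimage_image]

/-- The incidence relation between the points of `U` and the lines meeting `U` in `q + 1`
points. -/
def secantIncid (Pl : ProjPlane) (q : ℕ) (U : Set Pl.Point) (x : U)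
    (l : {l : Pl.Line // (U ∩ {p | Pl.Incid p l}).ncard = q + 1}) : Prop :=
  Pl.Incid x l

theorem oddTransversalCount_unitalBlocks (hq : 0 < q) :
    oddTransversalCount (fun x (b : Pl.unitalBlocks q U) => x ∈ b.1) =
      oddTransversalCount (secantIncid Pl q U) := by
  let block (l : {l : Pl.Line // (U ∩ {p | Pl.Incid p l}).ncard = q + 1}) :
      Pl.unitalBlocks q U := ⟨{x | Pl.Incid x l}, l, l.2, rfl⟩
  have hbij : Function.Bijective block := by
    refine ⟨fun l m hlm => ?_, ?_⟩
    · obtain ⟨x, hx, y, hy, hxy⟩ := nontrivial_of_mem_unitalBlocks hq (block l).2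
      exact Subtype.ext ((Pl.exists_unique_line x y (Subtype.coe_ne_coe.2 hxy)).unique
        ⟨hx, hy⟩ (by rw [hlm] at hx hy; exact ⟨hx, hy⟩))
    · rintro ⟨_, l, hl, rfl⟩
      exact ⟨⟨l, hl⟩, rfl⟩
  exact (oddTransversalCount_congr (Equiv.refl _) (Equiv.ofBijective block hbij)
    fun _ _ => Iff.rfl).symm

end Unitals

section Folds

/-- `List.foldr` with the list as recursor argument, a form in which kernel evaluation takes a
single step per entry. -/
def fold {α β : Type*} (f : α → β → β) (z : β) (l : List α) : β :=
  List.rec z (fun a _ b => f a b) l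

theorem fold_eq_foldr {α β : Type*} (f : α → β → β) (z : β) (l : List α) :
    fold f z l = l.foldr f z := by
  induction l with
  | nil => rfl
  | cons a l ih => exact congrArg (f a) ih

/-- The sum of the values of `f` on the list `l`, evaluated with `fold`. -/
def sumOver {α : Type*} (l : List α) (f : α → ℕ) : ℕ :=
  fold (fun a s => f a + s) 0 l

theorem sumOver_eq_sum {α : Type*} (l : List α) (f : α → ℕ) : sumOver l f = (l.map f).sum := by
  rw [sumOver, fold_eq_foldr, List.sum, List.foldr_map]

theorem testBit_fold_or {α : Type*} (l : List α) (f : α → ℕ) (i : ℕ) :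
    (fold (fun a r => f a ||| r) 0 l).testBit i ↔ ∃ a ∈ l, (f a).testBit i := by
  rw [fold_eq_foldr]
  induction l with
  | nil => simp
  | cons a l ih => simp [ih]

theorem testBit_fold_xor {α : Type*} (l : List α) (f : α → ℕ) (i : ℕ) :
    (fold (fun a r => f a ^^^ r) 0 l).testBit i ↔ Odd (l.countP fun a => (f a).testBit i) := by
  rw [fold_eq_foldr]
  induction l with
  | nil => simp
  | cons a l ih =>
    cases ha : (f a).testBit i <;> simp [ha, Nat.odd_add_one, ← ih]

theorem fold_xor_lt_two_pow {α : Type*} {l : List α} {f : α → ℕ} {n : ℕ}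
    (h : ∀ a ∈ l, f a < 2 ^ n) : fold (fun a r => f a ^^^ r) 0 l < 2 ^ n := by
  rw [fold_eq_foldr]
  induction l with
  | nil => simp
  | cons a l ih =>
    simp only [List.forall_mem_cons] at h
    exact Nat.xor_lt_two_pow h.1 (ih h.2)

end Folds

section Bits

theorem sum_mul_pow_div_pow_mod {b : ℕ} {a : ℕ → ℕ} (ha : ∀ i, a i < b) (l n : ℕ) :
    (∑ i ∈ Finset.range n, a i * b ^ i) / b ^ l % b = if l < n then a l else 0 := by
  induction l generalizing n a with
  | zero =>
    cases n with
    | zero => simp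
    | succ n => simp [Finset.sum_range_succ', pow_succ, ← mul_assoc, ← Finset.sum_mul,
        Nat.add_mod, Nat.mod_eq_of_lt (ha 0)]
  | succ l ih =>
    cases n with
    | zero => simp
    | succ n =>
      have hb : 0 < b := (ha 0).pos
      have hsplit : ∑ i ∈ Finset.range (n + 1), a i * b ^ i =
          a 0 + b * ∑ i ∈ Finset.range n, a (i + 1) * b ^ i := by
        simp only [Finset.sum_range_succ', Finset.mul_sum]
        rw [add_comm]
        simp only [pow_zero, mul_one, pow_succ']
        congr 1
        exact Finset.sum_congr rfl fun i _ => mul_left_comm _ _ _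
      rw [hsplit, pow_succ', ← Nat.div_div_eq_div_mul, Nat.add_mul_div_left _ _ hb,
        Nat.div_eq_of_lt (ha 0), zero_add, ih fun i => ha (i + 1)]
      simp

theorem testBit_sum_mul_two_pow {k n : ℕ} {a : ℕ → ℕ} (ha : ∀ i, a i < 2 ^ k) (l : ℕ) {m : ℕ}
    (hm : m < k) : (∑ i ∈ Finset.range n, a i * (2 ^ k) ^ i).testBit (k * l + m) =
      (decide (l < n) && (a l).testBit m) := by
  have hdigit := congrArg (Nat.testBit · m) (sum_mul_pow_div_pow_mod ha l n)
  simp only [Nat.testBit_mod_two_pow, hm, ← pow_mul, Nat.testBit_div_two_pow] at hdigit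
  simp only [← pow_mul, add_comm (k * l)]
  split_ifs at hdigit <;> simp_all

theorem sum_range_mul (f : ℕ → ℕ) (k n : ℕ) : ∑ i ∈ Finset.range (k * n), f i =
    ∑ l ∈ Finset.range n, ∑ m ∈ Finset.range k, f (k * l + m) := by
  induction n with
  | zero => simp
  | succ n ih => rw [Nat.mul_succ, Finset.sum_range_add, ih, Finset.sum_range_succ]

/-- The repunit with `n` digits in base `2 ^ k`: the bits at the first `n` multiples of `k`. -/
def repunit (k n : ℕ) : ℕ :=
  (1 <<< (k * n) - 1) / (1 <<< k - 1)

theorem repunit_eq_sum {k : ℕ} (hk : 0 < k) (n : ℕ) :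
    repunit k n = ∑ i ∈ Finset.range n, (2 ^ k) ^ i := by
  rw [Nat.geomSum_eq (Nat.pow_le_pow_right two_pos hk), repunit, Nat.one_shiftLeft,
    Nat.one_shiftLeft, pow_mul]

theorem repunit_mul_lt {k : ℕ} (hk : 0 < k) (n : ℕ) {y : ℕ} (hy : y < 2 ^ k) :
    repunit k n * y < 2 ^ (k * n) := by
  have hgeom : repunit k n * (2 ^ k - 1) = 2 ^ (k * n) - 1 := by
    rw [repunit_eq_sum hk, geom_sum_mul_of_one_le Nat.one_le_two_pow, pow_mul]
  have := Nat.mul_le_mul_left (repunit k n) (Nat.le_sub_one_of_lt hy)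
  have := Nat.two_pow_pos (k * n)
  omega

theorem testBit_repunit {k : ℕ} (hk : 0 < k) (n i : ℕ) :
    (repunit k n).testBit i ↔ k ∣ i ∧ i < k * n := by
  have hone : 1 < 2 ^ k := Nat.one_lt_two_pow hk.ne'
  have hbit := testBit_sum_mul_two_pow (n := n) (fun _ => hone) (i / k) (Nat.mod_lt i hk)
  simp only [one_mul, ← repunit_eq_sum hk, Nat.div_add_mod] at hbit
  rw [hbit, Bool.and_eq_true, decide_eq_true_iff, Nat.testBit_one_eq_true_iff_self_eq_zero,
    Nat.div_lt_iff_lt_mul hk, Nat.dvd_iff_mod_eq_zero, and_comm, mul_comm n]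

theorem and_repunit_eq_sum {k : ℕ} (hk : 0 < k) (n z : ℕ) :
    z &&& repunit k n = ∑ i ∈ Finset.range n, (z.testBit (k * i)).toNat * (2 ^ k) ^ i := by
  have hlt (i : ℕ) : (z.testBit (k * i)).toNat < 2 ^ k :=
    (Bool.toNat_lt _).trans_le (Nat.pow_le_pow_right two_pos hk)
  refine Nat.eq_of_testBit_eq fun i => ?_
  obtain ⟨l, m, hm, rfl⟩ : ∃ l m, m < k ∧ i = k * l + m :=
    ⟨i / k, i % k, Nat.mod_lt i hk, (Nat.div_add_mod i k).symm⟩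
  have hdvd : k ∣ k * l + m ↔ m = 0 :=
    (Nat.dvd_add_right (dvd_mul_right k l)).trans
      ⟨fun h => Nat.eq_zero_of_dvd_of_lt h hm, fun h => h ▸ dvd_zero k⟩
  rw [testBit_sum_mul_two_pow hlt l hm, Nat.testBit_and, Bool.eq_iff_iff, Bool.and_eq_true,
    testBit_repunit hk, hdvd]
  rcases eq_or_ne m 0 with rfl | hm0
  · simp [-Nat.testBit_zero, hk, Nat.testBit_bool_toNat, and_comm]
  · simp [hm0, Nat.testBit_bool_toNat]

/-- The number of binary ones of `z < 2 ^ (k * n)`, for `k * n < 2 ^ k - 1`. Masking every `k`-th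
bit of the `k` shifts of `z` and reducing modulo `2 ^ k - 1` adds up all the bits, because
`2 ^ k ≡ 1`. -/
def popcount (k n z : ℕ) : ℕ :=
  (sumOver (List.range k) fun t => z >>> t &&& repunit k n) % (1 <<< k - 1)

theorem popcount_eq_sum {k n M z : ℕ} (hk : k * n < 2 ^ k - 1) (hM : M ≤ k * n) (hz : z < 2 ^ M) :
    popcount k n z = ∑ i ∈ Finset.range M, (z.testBit i).toNat := by
  have hkpos : 0 < k := Nat.pos_of_ne_zero (by rintro rfl; simp at hk)
  have hpow (i : ℕ) : (2 ^ k) ^ i ≡ 1 [MOD 2 ^ k - 1] := by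
    simpa using ((Nat.modEq_iff_dvd' Nat.one_le_two_pow).2 dvd_rfl).symm.pow i
  have hbits : ∑ t ∈ Finset.range k, ∑ i ∈ Finset.range n, (z.testBit (k * i + t)).toNat =
      ∑ i ∈ Finset.range M, (z.testBit i).toNat := by
    rw [Finset.sum_comm, ← sum_range_mul fun i => (z.testBit i).toNat]
    refine (Finset.sum_subset (Finset.range_mono hM) fun i _ hi => ?_).symm
    rw [Nat.testBit_lt_two_pow (hz.trans_le (Nat.pow_le_pow_right two_pos (by simpa using hi))),
      Bool.toNat_false]
  have hle : ∑ i ∈ Finset.range M, (z.testBit i).toNat ≤ M := by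
    simpa using Finset.sum_le_card_nsmul (Finset.range M) _ 1 fun i _ => Bool.toNat_le (z.testBit i)
  have hmod : ∑ t ∈ Finset.range k, (z >>> t &&& repunit k n) ≡
      ∑ i ∈ Finset.range M, (z.testBit i).toNat [MOD 2 ^ k - 1] := by
    simp only [and_repunit_eq_sum hkpos, Nat.testBit_shiftRight, ← hbits, add_comm _ (k * _)]
    exact Nat.ModEq.sum fun t _ => Nat.ModEq.sum fun i _ => by
      simpa using (hpow i).mul_left (z.testBit (k * i + t)).toNat
  rw [popcount, sumOver_eq_sum, ← List.sum_toFinset _ List.nodup_range, List.toFinset_range,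
    Nat.one_shiftLeft, hmod, Nat.mod_eq_of_lt (by omega)]

theorem mod_two_pow_of_sparse {v x : ℕ} (hv : 0 < v) (hx : ∀ i, x.testBit i → v ∣ i) :
    x % 2 ^ v = (x.testBit 0).toNat := by
  refine Nat.eq_of_testBit_eq fun i => ?_
  rw [Nat.testBit_mod_two_pow, Nat.testBit_bool_toNat]
  rcases eq_or_ne i 0 with rfl | hi
  · simp only [hv, decide_true]
  · have hxi : i < v → ¬ x.testBit i := fun hiv h =>
      (Nat.le_of_dvd (Nat.pos_of_ne_zero hi) (hx i h)).not_gt hiv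
    simpa [hi] using hxi

theorem mul_mod_two_pow_of_sparse {v x y : ℕ} (hv : 0 < v) (hx : ∀ i, x.testBit i → v ∣ i)
    (hy : y < 2 ^ v) : x * y % 2 ^ v = (x.testBit 0).toNat * y := by
  have hlt : (x.testBit 0).toNat * y < 2 ^ v :=
    (Nat.mul_le_mul_right y (Bool.toNat_le _)).trans_lt (by rwa [one_mul])
  rw [← Nat.mod_mul_mod, mod_two_pow_of_sparse hv hx, Nat.mod_eq_of_lt hlt]

theorem mul_div_two_pow_of_sparse {v x y : ℕ} (hv : 0 < v) (hx : ∀ i, x.testBit i → v ∣ i)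
    (hy : y < 2 ^ v) : x * y / 2 ^ v = x / 2 ^ v * y := by
  have hlt : x % 2 ^ v * y < 2 ^ v := by
    rw [mod_two_pow_of_sparse hv hx]
    exact (Nat.mul_le_mul_right y (Bool.toNat_le _)).trans_lt (by rwa [one_mul])
  conv_lhs => rw [← Nat.div_add_mod x (2 ^ v), add_mul, mul_assoc]
  rw [Nat.mul_add_div (Nat.two_pow_pos v), Nat.div_eq_of_lt hlt, add_zero]

theorem testBit_mul_of_sparse {v x y : ℕ} (hx : ∀ i, x.testBit i → v ∣ i) (hy : y < 2 ^ v)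
    (l : ℕ) {m : ℕ} (hm : m < v) :
    (x * y).testBit (v * l + m) ↔ x.testBit (v * l) ∧ y.testBit m := by
  have hv : 0 < v := m.zero_le.trans_lt hm
  induction l generalizing x with
  | zero =>
    have hbit := congrArg (Nat.testBit · m) (mul_mod_two_pow_of_sparse hv hx hy)
    simp only [Nat.testBit_mod_two_pow, hm, decide_true, Bool.true_and] at hbit
    rw [mul_zero, zero_add, hbit]
    cases x.testBit 0 <;> simp
  | succ l ih =>
    have hshift (i : ℕ) (hi : (x / 2 ^ v).testBit i) : v ∣ i := by
      rw [Nat.testBit_div_two_pow] at hi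
      exact (Nat.dvd_add_left dvd_rfl).1 (hx _ hi)
    rw [Nat.mul_succ, Nat.add_right_comm, ← Nat.testBit_div_two_pow (n := v),
      ← Nat.testBit_div_two_pow (n := v), mul_div_two_pow_of_sparse hv hx hy]
    exact ih hshift

end Bits

section Matrices

/-- The number whose binary ones are at the positions `k * l` for `l ∈ s`. -/
def bitSet (k : ℕ) (s : List ℕ) : ℕ :=
  fold (fun l r => 1 <<< (k * l) ||| r) 0 s

theorem testBit_bitSet (k : ℕ) (s : List ℕ) (i : ℕ) :
    (bitSet k s).testBit i ↔ ∃ l ∈ s, k * l = i := by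
  simp [bitSet, testBit_fold_or, Nat.one_shiftLeft, Nat.testBit_two_pow]

theorem testBit_bitSet_one (s : List ℕ) (i : ℕ) : (bitSet 1 s).testBit i ↔ i ∈ s := by
  simp [testBit_bitSet]

theorem bitSet_one_lt {v : ℕ} {s : List ℕ} (hs : ∀ l ∈ s, l < v) : bitSet 1 s < 2 ^ v :=
  Nat.lt_pow_two_of_testBit _ fun i hi => Bool.eq_false_iff.2 fun h =>
    hi.not_gt (hs i ((testBit_bitSet_one s i).1 h))

/-- The matrix, with entry `(l, m)` in bit `v * l + m`, telling which `l, m < v` lie in a common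
`S p` with `p ∈ U`. -/
def meetMatrix (v : ℕ) (S : ℕ → List ℕ) (U : List ℕ) : ℕ :=
  fold (fun p M => bitSet v (S p) * bitSet 1 (S p) ||| M) 0 U

theorem testBit_meetMatrix {v : ℕ} {S : ℕ → List ℕ} {U : List ℕ}
    (hS : ∀ p ∈ U, ∀ l ∈ S p, l < v) (l : ℕ) {m : ℕ} (hm : m < v) :
    (meetMatrix v S U).testBit (v * l + m) ↔ ∃ p ∈ U, l ∈ S p ∧ m ∈ S p := by
  have hsparse (p i : ℕ) (hi : (bitSet v (S p)).testBit i) : v ∣ i := by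
    obtain ⟨j, -, rfl⟩ := (testBit_bitSet v (S p) i).1 hi
    exact dvd_mul_right v j
  rw [meetMatrix, testBit_fold_or]
  refine exists_congr fun p => and_congr_right fun hp => ?_
  rw [testBit_mul_of_sparse (hsparse p) (bitSet_one_lt (hS p hp)) l hm, testBit_bitSet,
    testBit_bitSet_one]
  simp [(m.zero_le.trans_lt hm).ne']

/-- The outer product of column `b` and row `b` of the matrix `M`. -/
def transversalMatrix (v M b : ℕ) : ℕ :=
  (M >>> b &&& repunit v v) * (M >>> (v * b) % 1 <<< v)

theorem testBit_transversalMatrix {v l m : ℕ} (M b : ℕ) (hl : l < v) (hm : m < v) :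
    (transversalMatrix v M b).testBit (v * l + m) ↔
      M.testBit (v * l + b) ∧ M.testBit (v * b + m) := by
  have hv : 0 < v := m.zero_le.trans_lt hm
  have hsparse (i : ℕ) (hi : (M >>> b &&& repunit v v).testBit i) : v ∣ i := by
    rw [Nat.testBit_and, Bool.and_eq_true, testBit_repunit hv] at hi
    exact hi.2.1
  rw [transversalMatrix, Nat.one_shiftLeft,
    testBit_mul_of_sparse hsparse (Nat.mod_lt _ (Nat.two_pow_pos v)) l hm, Nat.testBit_and,
    Bool.and_eq_true, testBit_repunit hv]
  simp [hl, hm, hv, add_comm b]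

theorem transversalMatrix_lt {v : ℕ} (hv : 0 < v) (M b : ℕ) :
    transversalMatrix v M b < 2 ^ (v * v) := by
  rw [transversalMatrix, Nat.one_shiftLeft]
  exact (Nat.mul_le_mul_right _ Nat.and_le_right).trans_lt
    (repunit_mul_lt hv v (Nat.mod_lt _ (Nat.two_pow_pos v)))

/-- The matrix whose entry `(l, m)` is the parity of the number of `b ∈ s` such that the matrix `M`
has the entries `(l, b)` and `(b, m)`. -/
def parityMatrix (v M : ℕ) (s : List ℕ) : ℕ :=
  fold (fun b Z => transversalMatrix v M b ^^^ Z) 0 s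

theorem testBit_parityMatrix {v l m : ℕ} (M : ℕ) (s : List ℕ) (hl : l < v) (hm : m < v) :
    (parityMatrix v M s).testBit (v * l + m) ↔
      Odd (s.countP fun b => M.testBit (v * l + b) ∧ M.testBit (v * b + m)) := by
  rw [parityMatrix, testBit_fold_xor]
  simp only [← testBit_transversalMatrix M _ hl hm, Bool.decide_eq_true]

theorem parityMatrix_lt {v : ℕ} (hv : 0 < v) (M : ℕ) (s : List ℕ) :
    parityMatrix v M s < 2 ^ (v * v) :=
  fold_xor_lt_two_pow fun b _ => transversalMatrix_lt hv M b

end Matrices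

section Invariant

variable {v : ℕ} {S : ℕ → List ℕ} {U : List ℕ}

/-- The incidence relation between the points `p ∈ U` and the lines in some `S p`, where `S p`
lists the lines through `p`. -/
def listIncid (S : ℕ → List ℕ) (U : List ℕ) (p : {p // p ∈ U}) (l : {l // ∃ p ∈ U, l ∈ S p}) :
    Prop :=
  l.1 ∈ S p

theorem natCard_mem_and {α : Type*} {s : List α} (hs : s.Nodup) (Q : α → Prop)
    [DecidablePred Q] : Nat.card {a // a ∈ s ∧ Q a} = s.countP fun a => Q a := by
  classical
  rw [List.countP_eq_length_filter, ← List.toFinset_card_of_nodup (hs.filter _),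
    ← Nat.card_eq_finsetCard]
  exact Nat.card_congr (Equiv.subtypeEquivRight fun a => by simp)

theorem natCard_testBit (z n : ℕ) : Nat.card {i // i < n ∧ z.testBit i} =
    ∑ i ∈ Finset.range n, (z.testBit i).toNat := by
  rw [Nat.subtype_card ((Finset.range n).filter (z.testBit ·)) (by simp), Finset.card_filter]
  exact Finset.sum_congr rfl fun i _ => by cases z.testBit i <;> rfl

theorem oddTransversalCount_eq_sum {P L : Type*} [Fintype P] [Finite L] (I : P → L → Prop) :
    oddTransversalCount I = ∑ x, Nat.card {t : L × L // Odd (Nat.card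
      {b // I x b ∧ (∃ y, I y b ∧ I y t.1) ∧ ∃ y, I y b ∧ I y t.2})} := by
  rw [← Nat.card_sigma]
  exact Nat.card_congr (Equiv.subtypeProdEquivSigmaSubtype fun x (t : L × L) => Odd (Nat.card
      {b // I x b ∧ (∃ y, I y b ∧ I y t.1) ∧ ∃ y, I y b ∧ I y t.2}))

theorem natCard_transversals (hv : ∀ p ∈ U, ∀ l ∈ S p, l < v) (hnodup : ∀ p ∈ U, (S p).Nodup)
    (x : {p // p ∈ U}) (l m : {l // ∃ p ∈ U, l ∈ S p}) :
    Nat.card {b // listIncid S U x b ∧ (∃ y, listIncid S U y b ∧ listIncid S U y l) ∧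
        ∃ y, listIncid S U y b ∧ listIncid S U y m} =
      (S x).countP fun b => (meetMatrix v S U).testBit (v * l + b) ∧
        (meetMatrix v S U).testBit (v * b + m) := by
  rw [← natCard_mem_and (hnodup x x.2)]
  refine Nat.card_congr (.trans (Equiv.subtypeEquivRight fun b => ?_)
    (Equiv.subtypeSubtypeEquivSubtype fun hb => ⟨x, x.2, hb.1⟩))
  refine and_congr_right fun hb => ?_
  obtain ⟨p, hp, hm⟩ := m.2
  rw [testBit_meetMatrix hv _ (hv x x.2 b hb), testBit_meetMatrix hv _ (hv p hp m hm)]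
  simp only [listIncid, Subtype.exists, exists_prop, and_comm]

theorem natCard_odd_transversals (hv : ∀ p ∈ U, ∀ l ∈ S p, l < v)
    (hnodup : ∀ p ∈ U, (S p).Nodup) (x : {p // p ∈ U}) :
    Nat.card {t : {l // ∃ p ∈ U, l ∈ S p} × {l // ∃ p ∈ U, l ∈ S p} // Odd (Nat.card
      {b // listIncid S U x b ∧ (∃ y, listIncid S U y b ∧ listIncid S U y t.1) ∧
        ∃ y, listIncid S U y b ∧ listIncid S U y t.2})} =
    Nat.card {i // i < v * v ∧ (parityMatrix v (meetMatrix v S U) (S x)).testBit i} := by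
  have hlt (l : {l // ∃ p ∈ U, l ∈ S p}) : l.1 < v := l.2.elim fun p hp => hv p hp.1 l hp.2
  simp only [natCard_transversals hv hnodup]
  refine Nat.card_congr (Equiv.ofBijective (fun t => ⟨v * t.1.1 + t.1.2, ?_,
    (testBit_parityMatrix _ _ (hlt t.1.1) (hlt t.1.2)).2 t.2⟩) ⟨?_, ?_⟩)
  · exact Nat.mul_add_lt_mul_of_lt_of_lt (hlt _) (hlt _)
  · rintro ⟨⟨l, m⟩, hlm⟩ ⟨⟨l', m'⟩, hlm'⟩ h
    have hcode : m.1 + v * l = m' + v * l' := by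
      simpa only [add_comm] using congrArg Subtype.val h
    have hvpos : 0 < v := (hlt m).pos
    obtain ⟨rfl, rfl⟩ : l = l' ∧ m = m' := by
      constructor <;> apply Subtype.ext
      · simpa [Nat.add_mul_div_left, hvpos, Nat.div_eq_of_lt, hlt] using congrArg (· / v) hcode
      · simpa [Nat.mod_eq_of_lt, hlt] using congrArg (· % v) hcode
    rfl
  · rintro ⟨i, hi, hbit⟩
    have hvpos : 0 < v := Nat.pos_of_ne_zero fun h => by simp [h] at hi
    obtain ⟨l, m, hl, hm, rfl⟩ : ∃ l m, l < v ∧ m < v ∧ i = v * l + m :=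
      ⟨i / v, i % v, Nat.div_lt_of_lt_mul hi, Nat.mod_lt i hvpos, (Nat.div_add_mod i v).symm⟩
    have hodd := (testBit_parityMatrix _ _ hl hm).1 hbit
    obtain ⟨b, hb, hmeet⟩ := List.countP_pos_iff.1 hodd.pos
    rw [decide_eq_true_iff, testBit_meetMatrix hv l (hv x x.2 b hb),
      testBit_meetMatrix hv b hm] at hmeet
    obtain ⟨⟨p, hp, hlp, -⟩, q, hq, -, hmq⟩ := hmeet
    exact ⟨⟨⟨⟨l, p, hp, hlp⟩, ⟨m, q, hq, hmq⟩⟩, hodd⟩, rfl⟩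

/-- The invariant `oddTransversalCount` of the incidence relation given by `S` and `U`, computed
with bit matrices. The parameters of `popcount` suffice for `v ≤ 273`. -/
def transversalInvariant (v : ℕ) (S : ℕ → List ℕ) (U : List ℕ) : ℕ :=
  sumOver U fun p => popcount 17 4385 (parityMatrix v (meetMatrix v S U) (S p))

theorem transversalInvariant_eq (hpos : 0 < v) (hle : v ≤ 273) (hU : U.Nodup)
    (hv : ∀ p ∈ U, ∀ l ∈ S p, l < v) (hnodup : ∀ p ∈ U, (S p).Nodup) :
    transversalInvariant v S U = oddTransversalCount (listIncid S U) := by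
  have : Finite {l // ∃ p ∈ U, l ∈ S p} :=
    Set.Finite.subset (Set.finite_Iio v) fun l ⟨p, hp, hl⟩ => hv p hp l hl
  rw [oddTransversalCount_eq_sum]
  simp only [natCard_odd_transversals hv hnodup, natCard_testBit]
  have hpopcount (z : ℕ) (hz : z < 2 ^ (v * v)) :
      popcount 17 4385 z = ∑ i ∈ Finset.range (v * v), (z.testBit i).toNat :=
    popcount_eq_sum (by norm_num) ((Nat.mul_le_mul hle hle).trans (by norm_num)) hz
  simp only [transversalInvariant, sumOver_eq_sum, hpopcount _ (parityMatrix_lt hpos _ _)]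
  classical
  rw [← List.sum_toFinset _ hU]
  exact (Finset.sum_subtype _ (fun _ => List.mem_toFinset) _)

end Invariant

section PencilFamilies

variable {n v q : ℕ} {L : ℕ → List ℕ} {s : List ℕ}

/-- Any two distinct points less than `v` are on exactly one common line, where `L p` lists the
lines through `p`. The remainder vanishes when the bitwise conjunction is a power of two, that is,
has exactly one binary one; a single sum is faster to evaluate than a conjunction of equations. -/
def PairwiseMeetOnce (v : ℕ) (L : ℕ → List ℕ) : Prop :=
  (sumOver (List.range v) fun p => sumOver (List.range p) fun q =>
    1 <<< v % (bitSet 1 (L p) &&& bitSet 1 (L q))) = 0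

instance (v : ℕ) (L : ℕ → List ℕ) : Decidable (PairwiseMeetOnce v L) :=
  inferInstanceAs (Decidable (_ = 0))

theorem existsUnique_mem_of_and_dvd {s t : List ℕ} (h : bitSet 1 s &&& bitSet 1 t ∣ 2 ^ v) :
    ∃! l, l ∈ s ∧ l ∈ t := by
  obtain ⟨i, -, hi⟩ := (Nat.dvd_prime_pow Nat.prime_two).1 h
  have hmem (l : ℕ) : l ∈ s ∧ l ∈ t ↔ i = l := by
    rw [← testBit_bitSet_one, ← testBit_bitSet_one, ← Bool.and_eq_true, ← Nat.testBit_and, hi,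
      Nat.testBit_two_pow, decide_eq_true_iff]
  simp only [hmem, existsUnique_eq']

theorem PairwiseMeetOnce.existsUnique_mem (h : PairwiseMeetOnce v L) {p q : ℕ} (hp : p < v)
    (hq : q < v) (hpq : p ≠ q) : ∃! l, l ∈ L p ∧ l ∈ L q := by
  wlog hqp : q < p generalizing p q
  · simpa only [and_comm] using this hq hp hpq.symm (by omega)
  simp only [PairwiseMeetOnce, sumOver_eq_sum, List.sum_eq_zero_iff, List.forall_mem_map,
    List.mem_range, Nat.one_shiftLeft] at h
  exact existsUnique_mem_of_and_dvd (Nat.dvd_of_mod_eq_zero (h p hp q hqp))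

/-- The lists `L p` of the lines through the points `p < v` of a projective plane of order `n`. -/
structure IsPencilFamily (n v : ℕ) (L : ℕ → List ℕ) : Prop where
  one_lt : 1 < n
  card_eq : v = n ^ 2 + n + 1
  nodup : ∀ p < v, (L p).Nodup
  length_eq : ∀ p < v, (L p).length = n + 1
  lt : ∀ p < v, ∀ l ∈ L p, l < v
  pairwiseMeetOnce : PairwiseMeetOnce v L

theorem ncard_fin_mem (hs : s.Nodup) (hlt : ∀ p ∈ s, p < v) :
    {p : Fin v | p.1 ∈ s}.ncard = s.length := by
  rw [← List.toFinset_card_of_nodup hs, ← Set.ncard_coe_finset,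
    ← Set.ncard_image_of_injective _ Fin.val_injective]
  congr 1
  ext p
  simpa [Fin.exists_iff] using hlt p

theorem IsPencilFamily.isPlaneLike (h : IsPencilFamily n v L) :
    IsPlaneLike n fun p l : Fin v => l.1 ∈ L p where
  one_lt := h.one_lt
  card_point := by rw [Nat.card_fin, h.card_eq]
  card_line := by rw [Nat.card_fin, h.card_eq]
  ncard_pencil p := by rw [ncard_fin_mem (h.nodup p p.2) (h.lt p p.2), h.length_eq p p.2]
  existsUnique_line p q hpq := by
    obtain ⟨l, hl, hunique⟩ :=
      h.pairwiseMeetOnce.existsUnique_mem p.2 q.2 (Fin.val_ne_of_ne hpq)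
    exact ⟨⟨l, h.lt p p.2 l hl.1⟩, hl, fun m hm => Fin.ext (hunique m hm)⟩

/-- The number whose base-512 digit at `l` is the number of points `p ∈ s` on the line `l`. -/
def degreeCode (L : ℕ → List ℕ) (s : List ℕ) : ℕ :=
  sumOver s fun p => sumOver (L p) fun l => 1 <<< (9 * l)

/-- The number of points of `s` on the line `l`, for a list `s` of less than 512 points. -/
def degree (L : ℕ → List ℕ) (s : List ℕ) (l : ℕ) : ℕ :=
  degreeCode L s >>> (9 * l) % 512

theorem sumOver_two_pow_eq_sum {t : List ℕ} (hnodup : t.Nodup) (hlt : ∀ l ∈ t, l < v) :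
    (sumOver t fun l => 1 <<< (9 * l)) =
      ∑ i ∈ Finset.range v, (if i ∈ t then 1 else 0) * (2 ^ 9) ^ i := by
  simp only [ite_mul, one_mul, zero_mul, ← List.mem_toFinset (l := t), Finset.sum_ite_mem]
  rw [Finset.inter_eq_right.2 fun l hl => Finset.mem_range.2 (hlt l (List.mem_toFinset.1 hl)),
    sumOver_eq_sum, List.sum_toFinset _ hnodup]
  simp only [Nat.one_shiftLeft, pow_mul]

theorem degreeCode_eq_sum (hnodup : ∀ p ∈ s, (L p).Nodup) (hlt : ∀ p ∈ s, ∀ l ∈ L p, l < v) :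
    degreeCode L s = ∑ i ∈ Finset.range v, (s.countP fun p => i ∈ L p) * (2 ^ 9) ^ i := by
  rw [degreeCode, sumOver_eq_sum]
  induction s with
  | nil => simp
  | cons p s ih =>
    rw [List.forall_mem_cons] at hnodup hlt
    rw [List.map_cons, List.sum_cons, ih hnodup.2 hlt.2, sumOver_two_pow_eq_sum hnodup.1 hlt.1,
      ← Finset.sum_add_distrib]
    simp only [← add_mul, List.countP_cons, decide_eq_true_iff, add_comm]

/-- The lines through `p` meeting `s` in `q + 1` points. -/
def secants (q : ℕ) (L : ℕ → List ℕ) (s : List ℕ) (p : ℕ) : List ℕ :=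
  (L p).filter fun l => degree L s l = q + 1

theorem mem_secants {p l : ℕ} : l ∈ secants q L s p ↔ l ∈ L p ∧ degree L s l = q + 1 := by
  rw [secants, List.mem_filter, decide_eq_true_iff]

namespace IsPencilFamily

theorem degree_eq_countP (h : IsPencilFamily n v L) (hlt : ∀ p ∈ s, p < v) (hlen : s.length < 512)
    (l : ℕ) : degree L s l = s.countP fun p => l ∈ L p := by
  have hdigit (i : ℕ) : (s.countP fun p => i ∈ L p) < 2 ^ 9 := List.countP_le_length.trans_lt hlen
  rw [degree, Nat.shiftRight_eq_div_pow, pow_mul, show 512 = 2 ^ 9 from rfl,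
    degreeCode_eq_sum (fun p hp => h.nodup p (hlt p hp)) (fun p hp => h.lt p (hlt p hp)),
    sum_mul_pow_div_pow_mod hdigit, ite_eq_left_iff]
  intro hl
  exact (List.countP_eq_zero.2 fun p hp hmem =>
    hl (h.lt p (hlt p hp) l (of_decide_eq_true hmem))).symm

/-- The projective plane on the points and lines less than `v` with the pencils `L`. -/
def plane (h : IsPencilFamily n v L) : ProjPlane :=
  h.isPlaneLike.toProjPlane

/-- The set of the points on the list `s`. -/
def pointSet (h : IsPencilFamily n v L) (s : List ℕ) : Set h.plane.Point :=
  {p : Fin v | p.1 ∈ s}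

theorem ncard_pointSet_inter (h : IsPencilFamily n v L) (hs : s.Nodup) (hlt : ∀ p ∈ s, p < v)
    (hlen : s.length < 512) (l : Fin v) :
    (h.pointSet s ∩ {p | h.plane.Incid p l}).ncard = degree L s l := by
  rw [h.degree_eq_countP hlt hlen, List.countP_eq_length_filter,
    ← ncard_fin_mem (v := v) (hs.filter _) fun p hp => hlt p (List.mem_of_mem_filter hp)]
  have hmem (p : Fin v) : p.1 ∈ s.filter (fun p => l.1 ∈ L p) ↔ p.1 ∈ s ∧ l.1 ∈ L p := by
    rw [List.mem_filter, decide_eq_true_iff]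
  exact congrArg Set.ncard (Set.ext fun p => (hmem p).symm)

theorem isUnital (h : IsPencilFamily n v L) (hs : s.Nodup) (hlt : ∀ p ∈ s, p < v)
    (hlen : s.length < 512) (hcard : s.length = q ^ 3 + 1)
    (hdegree : ∀ l < v, degree L s l = 1 ∨ degree L s l = q + 1) :
    h.plane.IsUnital q (h.pointSet s) := by
  refine ⟨(ncard_fin_mem hs hlt).trans hcard, fun (l : Fin v) => ?_⟩
  rw [h.ncard_pointSet_inter hs hlt hlen l]
  exact hdegree l l.2

theorem exists_mem_secants_iff (h : IsPencilFamily n v L) (hlt : ∀ p ∈ s, p < v)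
    (hlen : s.length < 512) (l : ℕ) :
    (∃ p ∈ s, l ∈ secants q L s p) ↔ degree L s l = q + 1 := by
  refine ⟨fun ⟨p, _, hl⟩ => (mem_secants.1 hl).2, fun hl => ?_⟩
  have hpos : 0 < s.countP fun p => l ∈ L p := by
    rw [← h.degree_eq_countP hlt hlen, hl]
    exact q.succ_pos
  obtain ⟨p, hp, hlp⟩ := List.countP_pos_iff.1 hpos
  exact ⟨p, hp, mem_secants.2 ⟨of_decide_eq_true hlp, hl⟩⟩

theorem oddTransversalCount_secantIncid (h : IsPencilFamily n v L) (hs : s.Nodup)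
    (hlt : ∀ p ∈ s, p < v) (hlen : s.length < 512) :
    oddTransversalCount (secantIncid h.plane q (h.pointSet s)) =
      oddTransversalCount (listIncid (secants q L s) s) := by
  have hsecant (l : Fin v) : (h.pointSet s ∩ {p | h.plane.Incid p l}).ncard = q + 1 ↔
      ∃ p ∈ s, l.1 ∈ secants q L s p := by
    rw [h.ncard_pointSet_inter hs hlt hlen l, h.exists_mem_secants_iff hlt hlen]
  have hline (l : {l // ∃ p ∈ s, l ∈ secants q L s p}) : l.1 < v :=
    l.2.elim fun p hp => h.lt p (hlt p hp.1) l (mem_secants.1 hp.2).1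
  refine oddTransversalCount_congr
    { toFun p := ⟨Fin.val (n := v) p.1, p.2⟩
      invFun p := ⟨(⟨p, hlt p p.2⟩ : Fin v), p.2⟩ }
    { toFun l := ⟨Fin.val (n := v) l.1, (hsecant l.1).1 l.2⟩
      invFun l := ⟨(⟨l, hline l⟩ : Fin v), (hsecant ⟨l, hline l⟩).2 l.2⟩ }
    fun p l => ?_
  have hdegree := (h.exists_mem_secants_iff hlt hlen _).1 ((hsecant l.1).1 l.2)
  exact (and_iff_left hdegree).symm.trans mem_secants.symm

end IsPencilFamily

end PencilFamilies

section Certificates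

/-- The lines through the point `p < 273` of a plane of order 16 with coordinates. The affine points
are the `p < 256`, the line `16 * m + b` has slope `m` and intercept `b`, the lines `256 + x` are
vertical and the line `272` is at infinity. The base-16 digit of `c` at the position
`16 * p + m` is the intercept of the line of slope `m` through `p`. -/
def pencil (c p : ℕ) : List ℕ :=
  if p < 256 then
    (256 + p / 16) :: (List.range 16).map fun m => 16 * m + c / 16 ^ (16 * p + m) % 16
  else if p < 272 then 272 :: (List.range 16).map fun b => 16 * (p - 256) + b
  else (List.range 17).map (256 + ·)

theorem nodup_pencil (c p : ℕ) : (pencil c p).Nodup := by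
  unfold pencil
  split_ifs
  · refine List.nodup_cons.2 ⟨?_, List.nodup_range.map_on fun m _ m' _ h => by omega⟩
    simp only [List.mem_map, List.mem_range]
    omega
  · refine List.nodup_cons.2 ⟨?_, List.nodup_range.map_on fun b _ b' _ h => by omega⟩
    simp only [List.mem_map, List.mem_range]
    omega
  · exact List.nodup_range.map (add_right_injective 256)

theorem length_pencil (c p : ℕ) : (pencil c p).length = 17 := by
  unfold pencil
  split_ifs <;> simp only [List.length_cons, List.length_map, List.length_range]

theorem lt_of_mem_pencil {c p l : ℕ} (hl : l ∈ pencil c p) : l < 273 := by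
  unfold pencil at hl
  split_ifs at hl <;> simp only [List.mem_cons, List.mem_map, List.mem_range] at hl <;> omega

theorem isPencilFamily_pencil {c : ℕ} (h : PairwiseMeetOnce 273 (pencil c)) :
    IsPencilFamily 16 273 (pencil c) where
  one_lt := by norm_num
  card_eq := by norm_num
  nodup p _ := nodup_pencil c p
  length_eq p _ := length_pencil c p
  lt _ _ _ := lt_of_mem_pencil
  pairwiseMeetOnce := h

/-- The positions less than `v` of the binary ones of `u`. -/
def support (v u : ℕ) : List ℕ :=
  (List.range v).filter (u.testBit ·)

theorem nodup_support (v u : ℕ) : (support v u).Nodup :=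
  List.nodup_range.filter _

theorem lt_of_mem_support {v u p : ℕ} (hp : p ∈ support v u) : p < v :=
  List.mem_range.1 (List.mem_of_mem_filter hp)

/-- The binary ones of `u` form a unital in the plane of order 16 with the pencils `L`, and the
design of this unital has the invariant `n`. -/
def IsUnitalWithInvariant (L : ℕ → List ℕ) (u n : ℕ) : Prop :=
  (support 273 u).length = 65 ∧
    (∀ l ∈ List.range 273, degree L (support 273 u) l = 1 ∨ degree L (support 273 u) l = 5) ∧
    transversalInvariant 273 (secants 4 L (support 273 u)) (support 273 u) = n

instance (L : ℕ → List ℕ) (u n : ℕ) : Decidable (IsUnitalWithInvariant L u n) :=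
  inferInstanceAs (Decidable (_ ∧ _))

/-- The number `n` is the `oddTransversalCount` of the design of a unital in a projective plane of
order 16. -/
def IsUnitalCount (n : ℕ) : Prop :=
  ∃ (Pl : ProjPlane) (U : Set Pl.Point), Pl.HasOrder 16 ∧ Pl.IsUnital 4 U ∧
    oddTransversalCount (fun x (b : Pl.unitalBlocks 4 U) => x ∈ b.1) = n

theorem IsUnitalWithInvariant.isUnitalCount {L : ℕ → List ℕ} {u n : ℕ}
    (hu : IsUnitalWithInvariant L u n) (h : IsPencilFamily 16 273 L) : IsUnitalCount n := by
  obtain ⟨hcard, hdegree, hinvariant⟩ := hu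
  have hs := nodup_support 273 u
  have hlt (p : ℕ) : p ∈ support 273 u → p < 273 := lt_of_mem_support
  have hlen : (support 273 u).length < 512 := by omega
  refine ⟨h.plane, h.pointSet (support 273 u), h.isPlaneLike.toProjPlane_hasOrder,
    h.isUnital hs hlt hlen hcard fun l hl => hdegree l (List.mem_range.2 hl), ?_⟩
  rw [oddTransversalCount_unitalBlocks four_pos, h.oddTransversalCount_secantIncid hs hlt hlen,
    ← hinvariant]
  exact (transversalInvariant_eq (by norm_num) le_rfl hs
    (fun p hp l hl => h.lt p (hlt p hp) l (mem_secants.1 hl).1)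
    fun p hp => (h.nodup p (hlt p hp)).filter _).symm

/-- The number with the base-`2 ^ 64` digits `T`. -/
def code (T : List ℕ) : ℕ :=
  fold (fun w r => r <<< 64 + w) 0 T

/-- Coordinates of a projective plane of order 16 and of some unitals in it: the word with index `p`
of `table` lists the intercepts of the lines through the point `p`, as in `pencil`, and `unitals`
contains the characteristic numbers of the unitals with the invariants of their designs. -/
structure Certificate where
  table : List ℕ
  unitals : List (ℕ × ℕ)

/-- The coordinates define a projective plane and unitals with the given invariants. -/
def Certificate.IsValid (C : Certificate) : Prop :=
  PairwiseMeetOnce 273 (pencil (code C.table)) ∧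
    ∀ U ∈ C.unitals, IsUnitalWithInvariant (pencil (code C.table)) U.1 U.2

instance (C : Certificate) : Decidable C.IsValid :=
  inferInstanceAs (Decidable (_ ∧ _))

/-- The claimed invariants of the designs of the unitals. -/
def Certificate.invariants (C : Certificate) : List ℕ :=
  C.unitals.map Prod.snd

theorem Certificate.IsValid.isUnitalCount {C : Certificate} (hC : C.IsValid) {n : ℕ}
    (hn : n ∈ C.invariants) : IsUnitalCount n := by
  obtain ⟨U, hU, rfl⟩ := List.mem_map.1 hn
  exact (hC.2 U hU).isUnitalCount (isPencilFamily_pencil hC.1)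

end Certificates

section Planes

set_option maxRecDepth 100000

/-- Coordinates of a projective plane of order 16 with 25 unitals. -/
def plane1 : Certificate where
  table := [
    00000000000000000000, 01229782938247303441, 02459565876494606882, 03689348814741910323,
    04919131752989213764, 06148914691236517205, 07378697629483820646, 08608480567731124087,
    09838263505978427528, 11068046444225730969, 12297829382473034410, 13527612320720337851,
    14757395258967641292, 15987178197214944733, 17216961135462248174, 18446744073709551615,
    09082584312885970275, 07440326103529438350, 13770544777029566505, 09578991690417535890,
    00447868117634578635, 18272096569960877745, 04637708269843016445, 16336034042261377335,
    03599124692374186320, 12425591773430592735, 03066317771195749350, 06426096797188597260,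
    14472614756871790500, 01416095780364496245, 10791810780351158040, 15810146354337481290,
    10910895977243877615, 07680075817177561200, 14911548676020742965, 01219811773729457955,
    09020655875354001750, 05011986577016004570, 16948313299803069945, 00133018706889766590,
    12014532941452286340, 06055649773643885595, 13592947237121516040, 03420176746481005980,
    09892732552980132705, 15227146405444865730, 17875461931189656135, 03658998298128581805,
    03357166730458915215, 00701935805958602610, 02110006392972401415, 16393694704820405355,
    13244665251056851605, 17760416478904077630, 07213812219172980570, 06697247680547914665,
    04783932820019705280, 15726416387726387640, 14926258573542877395, 09343813659189550125,
    10437745478795247180, 08885646680032138980, 12170365755174023190, 03820827971304334065,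
    01947097508405989260, 02792747333530786800, 01032572795763931425, 12639104107525889205,
    10132520938307343930, 08140796349196211400, 10975167578203121115, 03809694585038907495,
    13347622912863993510, 15503243147477697300, 16866077075984675475, 05594047358392874985,
    14018366393122097790, 05900760777013366095, 17561832107939438685, 07312301620910088450,
    16123742242952099415, 11855296933596978720, 05672870604533271960, 00227803245597125610,
    16174914403912920225, 10462141516733074050, 07805386455899512755, 03014218132712685765,
    04299922269075403230, 08236393491637578015, 06313827789139821165, 01584018564434769990,
    13285952094983612220, 09659855414168966265, 18079642525210547460, 14777966905088046075,
    16500403535131205820, 09426062219704944630, 06596328766219172295, 04726176166939450275,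
    11507384641499988750, 13062518033646996960, 03269220004980849720, 12547463295642926925,
    03467697437233813125, 01930112997180378735, 14314770416704664850, 17813151381280908330,
    00611350707838521945, 15916943805397508475, 08317213807410698385, 07567155372864383700,
    15644254600624038960, 08016023013459233565, 10834846580654269095, 12891964373048506065,
    12390350083485636450, 00343090593097559430, 06392750633207803635, 04432094393987674260,
    02855497637398206795, 09972324800849497950, 13854808502511305145, 08473717725801151020,
    16225360305379165560, 04887928109680696335, 02197555435491677130, 18161385800999991525,
    05488663716074749575, 07770944566728631080, 11573775534372502875, 04028490431160217545,
    01837587576676214205, 10329348580094648640, 12789477939358140660, 11390488362544028790,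
    16773301966573041930, 15489507711943150305, 00966718090845787155, 17484273734957144940,
    08408505994679665365, 02526384278905403310, 06506823500333240370, 14209660604429846175,
    16015631185215592620, 11108248391146747125, 14155676037430311405, 04375681306778981670,
    02406394930486619865, 17966777788512601995, 09798757923153100035, 05462746124842688625,
    08695982569999385520, 17079806531582498370, 01313564482081483860, 11897674902342609870,
    06258735895701668250, 01144280020528093800, 12939093271272132375, 06954901228601897535,
    13154734776704150595, 08850494642974813065, 13931749876084650090, 10664203596810580260,
    05915094413704740840, 01708250989295367840, 07503061162842889665, 04498417774117210635,
    00884322388778624925, 05694902791316818230, 10048321649203244565, 17350988852859851730,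
    12482113484453413500, 16834863052225239135, 02732833758950065335, 15319599379354752510,
    00541464684019700220, 06013434214878059190, 07920461510642715045, 15567843946513316655,
    03177412912893390180, 18099196669112257680, 11700324186078038025, 16530960163258086285,
    01626466820908806360, 04557877470531624570, 09237337745557726695, 13751244588055589970,
    05329933207885140510, 14609387060039345985, 08199481920823242555, 10711125488479372995,
    02048581148160264690, 07043585330090497260, 17265503351416596420, 03119048461750139475,
    06755482119035316270, 08508701335902305805, 04140265046295890760, 14117271240151716480,
    10520910606765391290, 12092926542402749745, 12995328233544520575, 15035040082549927830,
    00789962104465607895, 05205573962024399205, 09593648961013223595, 18342124064107865625,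
    02610782154211122945, 09446095912635664860, 11233675059375970365, 05364137715988792875,
    05792343575238671220, 13687587023658362250, 17068408755092601360, 07974107187927892215,
    00188265740182807365, 01752958430582121630, 09188913390192192930, 12234298278583222755,
    03903178646467205055, 14343227745057807960, 17387973304002458310, 15397999670479518825,
    07191542730133206345, 08782635555358162170, 12692823409395554670, 15167679106504413315,
    06789399206661593040, 10211442058545720015, 11602447974777185175, 04204965573247139100,
    00409578146260356660, 17609271203026252200, 11279233849113594705, 16592272693302595365,
    02295857522295411435, 02952744792497374845, 14668687153714504710, 05123371614843349170,
    05107237539302810460, 11766717598159202040, 07131454529647337115, 08950376332842995790,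
    10287807014731461300, 14514911721632046375, 16670914052582771670, 01452367749738183225,
    06894202571652166785, 11348144348298588000, 04077019547500350690, 00801140888993711535,
    02356348661326956570, 13403440605200011725, 15098672771343251205, 17713196656724568435]
  unitals := [
    (1079183176345091195379344627748344265159915215223243342442491190689077043306561568, 1604352),
    (541581808258919623895654876767159647986072898984328163894010553776540140880400384, 1605376),
    (127602911050788984445414542472326576184958121812856982109970144626444511797071972, 1610304),
    (8064544529716438687486384630669470460372825922802257630196057406457505240029282325, 1615232),
    (232285748029064171561056476621524704696569015861764098336134177726738546573312, 1617024),
    (490764939697801671680275794426614169821131627365447375073485676028191249544314944, 1617792),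
    (11858267858797216441102080320285126522318226421010905245739725701493820106606117923, 1618048),
    (1067950658128065509114888954540044025982898512274434561535722342055788225041006594, 1619456),
    (7593761279910092434217339823340261492479866603075473997125215645899622271028601120, 1619712),
    (4291041858792521545965348393013332860997991401445871238927502382063253710985756736, 1620096),
    (385972462987605682767294905745556414484952310038667020711163781800885973080545152, 1620768),
    (3799489218360901847355383138095942823910173296529513636777008964319768499541344256, 1621632),
    (2965435421186470395080674595802478377038187424113119407328386421922450246195034121, 1622464),
    (2253954307055212874964754493862958617058727401384672067593889135645219856461332512, 1622752),
    (7410700785263551419979804098014048272021436319041570522098470382486510203721762, 1623232),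
    (234983695780473807734531774094870220267030938874526365356154822390297494833538, 1624704),
    (3408973391859441129116668555599415624143945929527509217746690187849927394024652800, 1626848),
    (2001871746807674986806169977356012100350178831660240338290439855698760655045657600, 1628064),
    (1248881042060817472402008249550799543372740398234416288689664765138306659445965056, 1628416),
    (14859862311666086048342672640650995874158875130047178790477543414333349178665474, 1629856),
    (3438677689224951663118544041105617883512807616330057080474712694134434797862323200, 1630400),
    (1897224944920844417917733551821002416130340708475372762728551448583939071632542793, 1630848),
    (9848819350779954853920340493133878735148418869528285599420998769396805088127490120, 1631104),
    (7417930959405487077477060524471217765598020844068116656223415841732716483145800, 1631904),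
    (999632829200719820869539596018319399397357024212285009941381798727493586274852, 1638336)]

theorem plane1_isValid : plane1.IsValid := by
  decide +kernel

/-- Coordinates of a projective plane of order 16 with 24 unitals. -/
def plane2 : Certificate where
  table := [
    00000000000000000000, 01229782938247303441, 02459565876494606882, 03689348814741910323,
    04919131752989213764, 06148914691236517205, 07378697629483820646, 08608480567731124087,
    09838263505978427528, 11068046444225730969, 12297829382473034410, 13527612320720337851,
    14757395258967641292, 15987178197214944733, 17216961135462248174, 18446744073709551615,
    07264464260655688245, 12209890037261516550, 15151653663928783200, 12911342280755972295,
    08660868351379436220, 10141865117737148625, 05038386773643324810, 02127638189227295835,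
    14598242456238511080, 06892971492933270345, 10814084801069361150, 02374727923398359325,
    04470976428154541730, 16243651766772190335, 00849394714449184035, 17823794332071829140,
    14355315044360339565, 08995431569556049455, 04083444892956774870, 06206250144963802170,
    01362257577469335795, 13798207656962724750, 11371172497585766160, 00295722132494609490,
    04656667489323128235, 02403211692574010040, 15637617763728870375, 16912274512405538505,
    12607018141406563740, 09467368695653005125, 07317412438656037380, 18104580339579857265,
    08746074175378981725, 02223551334148274535, 05166736350659647500, 09679585746255413730,
    11902314243475378425, 14170293182831605680, 03276484392124736970, 13261220380808260980,
    10414313461242903765, 00283574825549276310, 18164435992963085955, 06502280336894291745,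
    17242655050858615320, 07116198088217807790, 15128321257013403195, 04295913771254729295,
    13736934646695337005, 14546372490864255555, 04418511077540595465, 08128424088204730680,
    15865031331047514900, 18049965546436900050, 12662166617083661925, 10513169046551994540,
    04762622503742626455, 02910924914578099185, 06019675652858726880, 09624316883197157310,
    07423219910762935695, 01455437692412466810, 00452482373198478795, 17004697814500931670,
    01402180312878771885, 02799621479602048905, 13928276504772572430, 06397333247282198175,
    06966568324943879505, 10239482455255368390, 08814391983616416075, 11241757856285725800,
    17621874386864724780, 16111246223103277170, 03652523258713406490, 13345528370575895280,
    05578993958760521955, 12387181728367970100, 00428341458806383575, 16658651039847252405,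
    05502959633693061885, 01140785356068116385, 13845635920314686070, 09370697544708537945,
    03971520204105854955, 01857751782660484530, 15364626594876392655, 11637501491555198535,
    02563102745757056100, 18354211207349298480, 06082456685089855710, 13472106988251201795,
    17123344112428714380, 07742757699779227800, 10975231637215888170, 08569262985822837525,
    12165197426767840530, 14947081403097948570, 15558107603479444545, 05057729007249882840,
    03336551050400872275, 17987916928562680005, 04219757684337675630, 02059374159003814710,
    08435916093760194720, 12809700611988124905, 07159344659714076540, 05816078130079572615,
    10229660565231082020, 16431424446810383355, 11181014867244242445, 00179097951948577215,
    00626584622499199725, 05971484238373159035, 01632962259133981455, 02668169030504194380,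
    09017524817849838750, 13567258933809135525, 15762646360873244550, 12063956896497783840,
    07944082159587645465, 17407402654687756890, 09257964731238525795, 16795806214694434260,
    11483174852494511415, 14664083488991846130, 03811683518466669000, 04899167809974486705,
    08004912554083747005, 17715111032927657190, 02652430082762137095, 05343826861701856080,
    11412541453094959755, 03563737886120388645, 14320660670649108900, 06310189361260457235,
    09894024089230579260, 11697712836029150145, 13682158405350019695, 16157650225730078610,
    00901808646723494265, 08864746951621234650, 01799870105528021070, 15252571426863523320,
    03519962311748318460, 10319231232627026955, 07000984523111385555, 00674732815854024810,
    17511898293881571870, 08263979117675853540, 06720233728346173110, 13151351420981269905,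
    05677553268753040245, 14475705935175491415, 01566859935835047720, 03034253436020232255,
    17037578663706189120, 15809709758421787305, 11861609527897223565, 10948308619641777090,
    10007349882496533885, 18246660197295501735, 01019602910237138760, 08195083632787340790,
    13073915129841875250, 15012823697198872110, 05297760444554618655, 07538377403986718400,
    10699152339190448865, 03215596330532423835, 04594369709367976020, 06563027405449581420,
    11965734467972586675, 16417763540641913610, 01678986398654663385, 14047749099468219525,
    17783481525666654285, 06696123092893301250, 10644433928584679775, 04118477705233583745,
    12474762406868171640, 07656930341455367415, 00551050043344142910, 16034000793394704570,
    12869603220268148700, 01180831222334054340, 05692986278974581030, 03113803803527880165,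
    16740158160521434275, 09357453556395062160, 08430205841617102185, 14229650668597544475,
    05841070736877459405, 11157038602662635700, 17466109025945373960, 07632005086050021675,
    14867093848616905695, 15326139483957366675, 02850217489409110950, 00980443898329515765,
    12409663744085862750, 08307380794394562690, 05221408052926798905, 12690157664989974090,
    02243030428759569900, 16556156931715086945, 10064859471129306135, 03961177329826861680,
    03838764717903965085, 13245418573597025880, 15573103580392679685, 06805100026169836020,
    09521661747448413615, 14774757104130062385, 17357626480573039545, 11800664192403411675,
    09190528070531750595, 00750118536159084060, 10537836089967576390, 03007427063016674430,
    07852384081892595690, 01972358335100234880, 16615221231305895975, 04730982759084167010,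
    15456267259584137820, 10782792203182538355, 00089631751193549700, 12995040242064539670,
    04353434947510179255, 11547609633804937455, 07905497316731130690, 14055987844292656425,
    03450772873571436240, 01877243439171007125, 09783539401949600250, 06483903434694331560,
    09122281510894183425, 17882721123982567275, 05463435385662026190, 16323794221387591485]
  unitals := [
    (7619468680303523803628559488995925068737860213674965735911060705018401214299505940, 1604512),
    (8605668996254489784250591942886826117113611868304563246369504425707381165484345617, 1606976),
    (8305621948591706337611090474261675689379416007893650664250167333296536196825547112, 1610368),
    (237142212892827594458302503010216174455411080249592517808228724798955836428271616, 1612224),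
    (8663231560816892422103209832747884069803768245399167135188359244087521151083937969, 1612992),
    (464702132211803125958130734992489701571579730667307331553297709132927504584849, 1614880),
    (7411967617304547011741416588233462815616881271837392952655560084693469459120136, 1615424),
    (8605690292264258107237823961530040158526759635582641609052675467819432967095462048, 1616544),
    (8605668073283738305092249871132702768064808439249673372942021823231718176476695840, 1617728),
    (237229665226445624975761117518190574667563737544751833552999128636419808904939400, 1619904),
    (4802480519632232829321366876361291035618574594122315149975358367297142413089309812, 1621056),
    (118643503446611329080315068031823595296929200296431814361226058325878659600089645, 1621344),
    (1013649481009176445171921023618514302939958915407395337194255316185600604766720, 1622272),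
    (2862560240748715159898476333192523943990174217541762510641233609436381100250373249, 1622624),
    (8605754921982813305753602203247427538830844384812639882378568013179595081109346324, 1624384),
    (1897140593727923474912964745663568263570069546964035903719177743176730252967746368, 1624736),
    (5709035394720725680896767334221543370917423235122547341031832088327481775905647140, 1626496),
    (276337820976626855710631947422870424877379984206092236190668307532795293847269924, 1627168),
    (12509255634833472823257563480620294540359765750084391714203493907402527303954334312, 1627488),
    (118645788872126002641272314773129526045775656309768476601504157289537608297349305, 1629504),
    (1256131192498810355523881532297140708799244557346178596497841305271119897253381120, 1630432),
    (5699880580870608269034262835455058996107134603203972302480706060170134921412676745, 1632960),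
    (5761836318829191185185612207426776633194197237027792255069319217874274872170915913, 1633280),
    (130266124123473937920289223265637020166579722994282610354224969036976617439412, 1635552)]

theorem plane2_isValid : plane2.IsValid := by
  decide +kernel

/-- Coordinates of a projective plane of order 16 with 21 unitals. -/
def plane3 : Certificate where
  table := [
    00000000000000000000, 01229782938247303441, 02459565876494606882, 03689348814741910323,
    04919131752989213764, 06148914691236517205, 07378697629483820646, 08608480567731124087,
    09838263505978427528, 11068046444225730969, 12297829382473034410, 13527612320720337851,
    14757395258967641292, 15987178197214944733, 17216961135462248174, 18446744073709551615,
    16151721613251354570, 01876826020738156935, 09495759414958740645, 05112479281082030235,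
    14511820722816498990, 07917358353750356820, 11258266493452239375, 02941299105939712620,
    17701649144837158515, 12794631078285638880, 06591737986637107410, 11695497032756856630,
    04007165354417983005, 01032165732173636025, 09203442902566217025, 15282132352012725240,
    10383888849361991715, 02209402083628557510, 00278124293918075775, 05035545005321056050,
    03653666108026132965, 02447640044183065860, 17974055459979977400, 07722991702238977185,
    08665495073769899550, 15446855422602883980, 14931326403022589655, 13241568540136393305,
    06740523185162749770, 09986137076254113120, 17034926447029571835, 11821806895040377245,
    15007101758430581415, 02139909769084747875, 12398577085667176005, 04499037833419774680,
    06900666070094194320, 12861496190395543950, 00549917259190516980, 05270763992951469855,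
    02586825802687020465, 17427081456160327770, 11122770088093126635, 14238730548960025350,
    16467365591447413545, 08865526559240524860, 09672598433874372045, 07565584149979597170,
    13884481480346518290, 02087116081874577240, 04305992279048359290, 09561231991737580095,
    12922197425669313270, 12582244133725844775, 15063053746366209870, 17765628416341912020,
    00151226621076432555, 03278168086659349440, 10946045340016755045, 16875704640181437585,
    05218443248262913545, 08440810348415152365, 06473660300839251075, 08017948449114806460,
    06952663165391059605, 01963051158809704185, 11941003924513817220, 11341558077108300855,
    15561245004761096385, 05341093480103073150, 05992580089179963660, 16330924943374011720,
    08564249012468207280, 14845892033303353455, 00705792474286478310, 04579318167435404370,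
    18176957402292591405, 02619049952661731610, 09359218254591834075, 13299355449395785635,
    12747259465170585165, 01607129543335296885, 17598398665684183020, 03394841920605278265,
    07823882323199226330, 15188563953163896255, 00630263061304221015, 10162870864075407090,
    06513187066671328020, 10795885523608933320, 09115648512012046995, 11816180201364597870,
    05428596320794167840, 04156496363978553345, 16246164857588697510, 14348583947119993995,
    09294663362399095785, 01334671023621827085, 05679169740796561905, 14189027868249379440,
    18092307559853196135, 11631713199507567795, 02955471279474058965, 07293490075701619995,
    06322652881944108840, 15717910967960763990, 01123889065988802510, 08960774566231554210,
    16774341820056973620, 10614793426384576650, 13665619894417692060, 03923455857088633935,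
    16571283073254308535, 06241910420686946865, 04389449287976297865, 00812725310422056600,
    03084219500858841075, 14056481585052563805, 12997920253755394245, 12093637253215000290,
    08228322725144386410, 07037803774004789295, 18254103875732141070, 10264865431323782940,
    04663501206099455190, 11461252133504118180, 15674429890136785275, 01742046868509545280,
    05975327842399766775, 13398794688056909370, 11205210146451961110, 15580607628849118245,
    14792340914839104225, 18065988046261801410, 04741739961250259565, 08333185589727596505,
    07931883466199963520, 00391126187195988300, 10101532863289628340, 16574533803611491155,
    01682875712156134815, 12641988880630399755, 02349540740750730360, 03807276118005559470,
    17118639886407849615, 10064546747482989150, 06843328051854537645, 14595638438389059765,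
    03840335620946960880, 10498970475524927100, 02827994249321953350, 07260427249321242375,
    15231442968292935570, 12130420579794701265, 01212746123801195835, 05510630657732447715,
    17439727259118525465, 13774898761062758760, 00497022930733175850, 08727182589891152580,
    05778615771512940990, 01402882256608648740, 07618648153390564605, 02783371490685145575,
    16996387646031865605, 04036657169459671755, 00901668424395177825, 13933419170154939960,
    12476307244281227385, 17826040847163557280, 11441012053370075970, 09592171816381992090,
    08429783233627561350, 16135105286496098835, 13423303100628231135, 04798578925488713820,
    17349323263036571265, 02262936576043823850, 08184875276281373685, 07460771721263258430,
    10998970894665275325, 00301361816551933395, 06629942835837205110, 12385745687093369295,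
    15384035792819881065, 04247103962871318060, 09894808247063486535, 13121377451153206530,
    14041068498919784340, 05565419096230302120, 03335716205135596635, 16410495264710027280,
    11565916188837174780, 16811019430836335970, 14317240299512788905, 03542169913343830935,
    10699373089225496145, 01007180604648620565, 05120004497151370170, 10363807882180755750,
    13706021087243321460, 15899724599151159600, 17554597098052262475, 06347503343887922415,
    07088533666385211075, 08855473870800796680, 01567326028155230430, 03128060990264135565,
    01868770945908870060, 07699116763923886665, 09747511634405513475, 18314740700008959285,
    04866875751833663175, 12018371222298587160, 15821803256857209060, 17244321888166681725,
    06101797513201950315, 14443971567860737530, 03221673593449776030, 04402130141557673910,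
    00086954309985098370, 10588376547439588560, 08101617051070439775, 13045919701707777825,
    02703421345102876335, 16652997027378229980, 05738375413606284165, 09397337100533470065,
    12193573862750560080, 14696882183854416195, 09065712673843603755, 17937189874265333910,
    16049854169962657290, 10819649117807643390, 13609581439860954135, 05854744354256043465,
    07134035835763705320, 00753953944984561725, 01482642980040707250, 03484001265665365860]
  unitals := [
    (3831907769930141160801827576906458807333045928817098520565925078746838598245159950, 1517760),
    (4098579448214141585329579011359331165664097614263085551973677739890408767860244512, 1577600),
    (7351430442586784733936942549061397806238435269589676184152100638463984254144742632, 1579904),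
    (7588627254462543041925505602348203031310041701838413370999838357851725262455112265, 1580960),
    (1084057865185734001966075610597862928560233928195157372458873829729582386315018298, 1586304),
    (4878111768728176957486720319157492703354392668886799789507061610727748018030772736, 1588768),
    (8063646336007585794246650813265054880712724877352018809037566974055519057974067500, 1597312),
    (772116126048100786856141319052998845882514160855324616276638327426580779875995844, 1606080),
    (7907225233659002904847763972654443201290084571419107974000589751578939284707611232, 1606272),
    (7670220083167210038509355178231664366334561095923448340090798648617514556564045824, 1612160),
    (2416154895957984507813301863815616107890421078373693128538068522553903421151281152, 1612800),
    (7737941156047392750474596640902740786160391748468946282962449182489144585632483858, 1615104),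
    (8189110558307370954414747473070190694413528909971552409975225949703096944050995730, 1616000),
    (118449984602852819147870881876820843075942562928360773348243865885009468463117, 1622080),
    (890212240295636628553860694998188758320850139983814113088549061755317266998624768, 1622144),
    (11443269860654814684056174431372184865732880679103349767421680392145469082995671234, 1623680),
    (8426002680506446717764266249952046147288234195725609343320215385164796431305810689, 1623712),
    (10019496731196469910721929850068716625929859298130240101302963031928135713005511298, 1625216),
    (5958317155087897731962991080153171727348190078910275086677364269832815263569182720, 1625408),
    (7856030934481545720063126611478673291576966716067472567374362521004633142248083470, 1626016),
    (7951791966286753769835123717014409482950060871178104604128473053673528680247525376, 1628672)]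

theorem plane3_isValid : plane3.IsValid := by
  decide +kernel

/-- Coordinates of a projective plane of order 16 with 18 unitals. -/
def plane4 : Certificate where
  table := [
    00000000000000000000, 01229782938247303441, 02459565876494606882, 03689348814741910323,
    04919131752989213764, 06148914691236517205, 07378697629483820646, 08608480567731124087,
    09838263505978427528, 11068046444225730969, 12297829382473034410, 13527612320720337851,
    14757395258967641292, 15987178197214944733, 17216961135462248174, 18446744073709551615,
    09054145236743392080, 02708696125250722335, 12039615700857479820, 01187785276764012105,
    11471088178550842920, 00748973215620581265, 09438983901988799415, 12779426297993949390,
    04309753566615901350, 16432099655532096885, 07846108867162314045, 15429533897402802675,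
    06362512313050139115, 14112188510093008740, 05673716350353766410, 17979325495696604370,
    09649856808903668880, 00448463145341009685, 08813719713546453720, 05961296992813528830,
    16836799500174807495, 07742688401691552015, 15894352688930041515, 03486344429228939490,
    14361382556450093625, 05703154285241336685, 13622960297859161220, 01438535548524825900,
    11640685932658400115, 02945188938860521290, 11441342361226929585, 17587180988225142870,
    14493989693885716080, 17108907058603981080, 01506830369527857855, 02855428303489938795,
    15063397017329099610, 13151313499698318060, 00812187941617659330, 06700567210400590740,
    11904873399029124855, 09998861533755608910, 04591219839387312345, 05220147162929093685,
    08222556466691658765, 10437696297735352710, 07969296621945337635, 17536680173649762465,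
    13447544970614168880, 14981900498571184155, 00970548548971959030, 07586046991758147420,
    12392147327485487085, 10498157558094859335, 05990325486483239055, 15334232356390222440,
    01325095920402552180, 02332159406237664435, 16723793980314874770, 09742048431564593610,
    05047506563304173265, 03878880148214737710, 09116758837553398185, 18206805563715151365,
    05444455896889685280, 12751242290672080410, 10118023706622931545, 00114329816298109140,
    04418701574852054655, 14138803681391733645, 09153797918637607230, 10998888502355371260,
    16873085065950751755, 06204821871883245480, 02577196328517468645, 12244645349603889990,
    15383357208394211250, 07120273747069532865, 02184181100977037415, 17848148529560702355,
    04357770015675466080, 15530364502616417310, 10830660192167285370, 05339146904872696815,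
    00209286975047662755, 11749653391131727545, 16191448006162586205, 01986208375410705285,
    06891086634460560705, 13273446826775311830, 08173288144855953195, 07909939333366360215,
    03025323444496851000, 09570609178748886540, 14869552768807176690, 17666167895080765380,
    16087802773829162880, 10062413192886112275, 07278313833868423755, 12983139686949599655,
    01642299344151673650, 04676479927709413320, 12130442176833433860, 14606591087404375590,
    02413443382774466205, 04033015909400177745, 10559562686028828015, 00873624974557284990,
    16401109405427713530, 08778329338605185205, 06803117898927707100, 18244266970322855145,
    16642952578543241280, 11869497881469388050, 04078861882325312205, 08487580109869301130,
    07677842113864929525, 03261053015328535470, 13365064520470397985, 04773778936474145115,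
    11242502102576758755, 15231816728499845895, 00514477971526278840, 13884230977297410015,
    02259822776961723030, 06617498568012483705, 10236780684345026100, 17430191742111635820,
    05852546965263952560, 11129181405310739220, 13818985022814147075, 15629059669882581105,
    08083706512559879580, 04115903496393489915, 01561982758979345640, 00255106417922107725,
    07276542839042036190, 12412153220068415535, 14308369991798228055, 16308861143123799945,
    10213106503906948965, 05177185824114329250, 03315772314091015110, 18115488504405397050,
    07447285054054126560, 08307926325667048470, 16950978931994198625, 11381818632243132930,
    14438598795281604030, 02028884715562857690, 04738504998045571065, 09873662991154668975,
    14994671912418691365, 00413890890843398460, 06088755486852802755, 03425465810261147220,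
    04246002053744801415, 12021076925101342875, 13736304749770428285, 17480124316680592200,
    02622732768841805040, 06467299576690310685, 04874983168978719390, 17041990037669033910,
    13047775293576898665, 10348643276102328690, 10948149283620195285, 12478213481267023665,
    08553497775803044815, 14012490169295548650, 15805446840308954700, 03551855588977591560,
    06934672554306801060, 01936257846928091475, 01077094885191505035, 17872850042118560295,
    01779611630159425440, 03606703686215436060, 05801952533377180215, 12641069229283161285,
    09472747882141764315, 16702558950345314340, 14778891995909236035, 02803718691041254665,
    00671554459239459690, 07038898162814635650, 05039785870896511350, 08400265126836303585,
    11181383871255074910, 13607448335284241400, 16013116585596312735, 18034245579281101245,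
    11727713159043475920, 05499784712467148055, 15690401988657726180, 14628437399476580760,
    06313724665289543430, 08717365527306640995, 03043114061224933500, 08004189921922059450,
    12961391442842855250, 02127918478326257355, 09244037242601855985, 10766064055915528365,
    00336914238163481385, 16273132082529088575, 04478407070875163205, 17761356543034074510,
    10600786492736061120, 07507030705174465305, 13975752574979044005, 09682716179071319085,
    03221947111884216705, 15179800697527535670, 03783250676393828250, 16519784776339326675,
    05592049515958362300, 08926422111551515380, 01816405095064880910, 06487349486520865890,
    13217111652176896335, 01142566873880204775, 12570780460004801880, 17350198180413088635,
    00634351682634073695, 01658513934575778045, 03106054605478731735, 03937585504941308340,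
    05290536460468816515, 06765322024139866410, 07186009701587543160, 08952740838863130690,
    09306569606758247910, 10688740636198049595, 11570415757640105070, 12846789639441051285,
    14235724961760813825, 15776511930080396745, 17253326760615435180, 18364758544493064720]
  unitals := [
    (91885157461561533249527264892889168206535998466868148059756262357138771566274096, 1588992),
    (9991530271935899382155900491883065563681398261522591846083874021297757694431600709, 1603072),
    (8308376462840778402590736588486396834904809599899206140246206106102324227599517954, 1604864),
    (289570446553855029840999674580310725188010987481146753557525560467640392223137, 1611520),
    (9634077555597370127657498526910914385276151980218403059656234761005622152245883968, 1612032),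
    (8567905379058280019935748005353336812694680277135460243590536944984443623212851269, 1612544),
    (7501283550275569590006456990530165137009347993480947773264855525352050903245345, 1613824),
    (9497368479118533037835931241995979117716600028937550862916823161219861833985442314, 1614592),
    (7616398492007793338707900568532528671876216991660210203511807848113462235516906048, 1616640),
    (8626253741993166547034815471953423306362733035717312249527591680117694380572148848, 1617664),
    (9609907539678039788009423840735707693056365503015371743218037702696992208865742913, 1619200),
    (293667707475762103111949343435117815885635478837291596639047295406252482966596, 1620864),
    (9497354936210817372185767112834047393139280193489165509097783162959356871588202499, 1624320),
    (7588626352365841789240632608064186784220070760804431751367871899358652256028603904, 1624576),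
    (7831572633129926600992525354500298428123698912925417353488082601113758530623707328, 1630464),
    (474358592725054569804555659738645298693765712970172662699249210860709486482751616, 1632000),
    (9961204476559723148875939547505140543493411696655276297057007956040115119420801024, 1633152),
    (189987520800861717376995104684065439927210429047595926777885811268204750184866, 1647360)]

theorem plane4_isValid : plane4.IsValid := by
  decide +kernel

/-- Coordinates of a projective plane of order 16 with 15 unitals. -/
def plane5 : Certificate where
  table := [
    00000000000000000000, 01229782938247303441, 02459565876494606882, 03689348814741910323,
    04919131752989213764, 06148914691236517205, 07378697629483820646, 08608480567731124087,
    09838263505978427528, 11068046444225730969, 12297829382473034410, 13527612320720337851,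
    14757395258967641292, 15987178197214944733, 17216961135462248174, 18446744073709551615,
    10553424359521771200, 04034487651046834410, 02631120818720628075, 18307872221785060230,
    12639323426949706785, 06525948846770224200, 01790751039453809655, 14320911658080502485,
    00240606098336717460, 06992837522040743295, 13567198394003826195, 05327521118563927980,
    09235955758027353945, 16978977823794424125, 09023518672423268610, 15403497180157614270,
    09723617863084365600, 12572860777997111325, 11474787043318943160, 14040092992823630175,
    04113427410566548350, 01561953612822429540, 13439992379542209525, 17530689448022011095,
    08945859266213897355, 04736359033562789385, 05792560506628586220, 01000460640143231025,
    02864562859069789590, 16720910992369152675, 15318906550591824330, 07736911212919893570,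
    01888842997254420960, 09376304744901796020, 07550084912928324885, 17259267420958304775,
    10494432760693524690, 00548917012898032515, 17353662779481114225, 06679417550453225370,
    08381446896451686975, 13334528373271707990, 03274521297015243945, 15216441996976086780,
    14225458522496820045, 04489100990480364840, 05474143639965260910, 12027380693450497995,
    06019644531587456880, 05478586640109757410, 00431189549914467750, 03440029294871779395,
    17879386509392263530, 11584983921703079640, 16236711449290529580, 02108752597524608910,
    08799677654124943005, 13753863615186154185, 14170875171961337265, 15434479075772325975,
    10058135729103832095, 03666377292823505925, 10911164902761595380, 07600094653548775995,
    15847306469497779840, 03384933957766630005, 05850106322097900855, 04885938142471483695,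
    07897756854883472100, 12053042437654702185, 04362627905827559745, 13769279072129031330,
    09886786318291178970, 14437876430024959755, 00194648646478841085, 08117801145961151430,
    11097543999169478430, 17609598539961667155, 01616965645068673980, 16561740702391902360,
    07268461456722606240, 11813077173341685330, 09730333014285565260, 01092845527228966350,
    13056227192343419535, 04420158008505995190, 16891683346443454425, 02218254793727759370,
    02760615142280436705, 14521495968906342435, 05229312194123538045, 05957391964621456155,
    18118865337700639125, 11246893308964086375, 15039043757929561140, 08209294402550901240,
    03001470019406392560, 13852921328305841310, 10651330107323905515, 07296589968430303500,
    11715020373062367030, 10257592188074639715, 05556200790990797400, 08716099163062510545,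
    16655396399501100735, 12789722186213322570, 06902158549648802445, 18079713242100374820,
    15879835719039916965, 01494250831997423730, 04253350613697714375, 00472301108820999705,
    03560279523007873680, 18281855281763624220, 12416908121139871230, 01697831814575864925,
    16209173269371982155, 06203474923409295375, 07180108583861690505, 02898934903976298180,
    08739904669872111285, 14885330677829525415, 10001825446052227890, 00853797712541614890,
    15136163815069710945, 12981052710366418920, 05727456230606264790, 10799854906232038515,
    18202958368194333360, 10350054362991351525, 13288202523274989630, 13976801419123342980,
    03901249288037462445, 05634122258267613435, 07471846647323595720, 08431767986433301545,
    06474822803675640930, 00295120695853510620, 02332543192905824535, 16304993362430856570,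
    15744335986815681795, 11225929486945822545, 01433762602303930950, 12505441605099154335,
    04598379464123672340, 17846432533855146510, 10397993187471676335, 12896854958999107740,
    16616246853902349810, 10191085176989494395, 07797296777625358125, 11821735090088298885,
    14083576635430341480, 00703034898257196615, 09129974745655962960, 01956647927284734675,
    15098699551924004070, 06405943999629349305, 05355891141884936385, 02674159646554783290,
    12111140216491156800, 01829151180547730895, 10733864377532955405, 04648213347129352890,
    03086628150684770700, 07939067094765931665, 17039828498797295700, 17729191913101579320,
    08271719803960070115, 13663943501702155815, 03863880262664419035, 09491331822582057390,
    16093656032351400825, 14403778932220058130, 06579365989802840310, 00089191465342637925,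
    17136114770035348320, 11941456921827934695, 01037262588926949810, 14565007382049339510,
    05176513806864232245, 09313495044949506765, 06088173987029886510, 02235010423540518555,
    06924814704319387635, 17453631834193025865, 10834393184799378570, 15704910320159187480,
    03236456840822239455, 08899911181858882980, 12942333293648801025, 04084466304651793500,
    14937270604084453680, 05090617619514310035, 01322141666860918440, 17694200604388247490,
    11324560883921350725, 00609307980854803695, 08318030748258064410, 03801630780130945785,
    02420133170613568350, 16839036162517983105, 10147583733153897990, 07709082148006597815,
    12339122562670916220, 06773967146353961940, 12747337532518466925, 15499929245827926315,
    13209792606492357840, 04231633320975281775, 11423103575290222140, 09617103021624963825,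
    02524339705251407805, 04786686556009371015, 16445500766713515030, 00914067184410251640,
    06770219187192326595, 17421464771543445675, 12190838821470262020, 08564811546712607310,
    08062320246163864410, 01196830246670133285, 14632254539456204265, 15582986493700198290,
    04983654058640132880, 03493206626701548930, 13169616187247536500, 14773253399609054970,
    11006746172068260390, 06284981405265063585, 00740620926846554715, 09192282101551153260,
    02089185792684066105, 16365246114808050885, 07097866066087719390, 03126845307839479560,
    11660651248530513075, 09577856896440529815, 16043674602050783055, 17968265683305965805]
  unitals := [
    (29643826120481978466234469079190416354885098997456590527893743005841063312097296, 1555200),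
    (13343041210986223344872892329196682241362867393721681776576603107296971245397231874, 1563440),
    (474284454165596323918646911148084933033275262291548952171819278202903845135356449, 1575720),
    (2491049689787356976648474811574357855097296286816048195957858976659258695553397057, 1578000),
    (29674564421716338839400140857090088851515365504691068246507649880051175579975936, 1579968),
    (275420770806051078583732227665210936180056493879902183408996110084924299439899523, 1588096),
    (8066916558160546247921132707143305712258068707802188610011254599831205427596530690, 1594560),
    (87104864611696773586071295499746662242754656782151820982673558825850989413662976, 1597632),
    (180420020828237236889882111250702300341269157367420830131883694098889719375594013, 1601536),
    (302235049710310311497226945178205648388504033870398981995499202957793769252020746, 1604480),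
    (10443581633043948990707813595023080131300679221093715592042336565112636121677595160, 1605120),
    (778238857962969987680446664961514063366759223773644149990840948017296705172214538, 1606144),
    (4091862602217086130628797949803899160164401229470610558308442151407951741340615168, 1609312),
    (1013651823182491878606440840130443667018909789545307311804428371504093662831247362, 1618752),
    (11386938875309303389893509866144173790426445511742921923388524534276531405667173898, 1620288)]

theorem plane5_isValid : plane5.IsValid := by
  decide +kernel

/-- Coordinates of a projective plane of order 16 with 12 unitals. -/
def plane6 : Certificate where
  table := [
    00000000000000000000, 01229782938247303441, 02459565876494606882, 03689348814741910323,
    04919131752989213764, 06148914691236517205, 07378697629483820646, 08608480567731124087,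
    09838263505978427528, 11068046444225730969, 12297829382473034410, 13527612320720337851,
    14757395258967641292, 15987178197214944733, 17216961135462248174, 18446744073709551615,
    16151721956849000250, 02265541898222356875, 09495759415192869405, 05112532057407087255,
    14511767946262560165, 07920570712257131460, 13275882887978634255, 03026761989867559020,
    00407834616131425395, 08975573714387280105, 06096218886602012370, 12341534871487612710,
    10942695586429013745, 18325882682666017200, 03583123070674052430, 15140550297261800280,
    08078043641091248835, 02209338380539690230, 04862928953836350255, 03882618071873449890,
    00194901577154976225, 03240088858908267780, 16791016072970376120, 07650875833279493145,
    10466936025571903605, 15464025443510725260, 14931326610254761680, 17853254884880631390,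
    06741381146988971850, 10038773992118680935, 12999859513532801085, 12168583583164084635,
    15007087395053354145, 02139909769356397155, 12398506716822466125, 11416408566551499480,
    05892106370587435920, 08362382566172127630, 16690832617318723620, 00660643680151586655,
    02586825802569514425, 05717722906033461450, 13446628518018519015, 14256850449314605830,
    17476176302233265205, 04285365604020557340, 09673331808130618875, 07563173517342280050,
    13884478177515620370, 01510655333866121160, 08268990695063195130, 10139064922741307055,
    12899679840123195990, 12573360079907661105, 15589974352880652105, 03930552772631796180,
    00727690671914738475, 03283234637045447550, 05181666444937310565, 16947632513321796765,
    17396176778027130375, 10746653344744209120, 06473660300839251075, 08020481724116979900,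
    06943665721617644190, 01313917085956826745, 11940898372756505220, 09035715067928751120,
    15561245005800564795, 16437962961205773735, 05992572408366006540, 13808905750432197960,
    00466755369502068405, 14886457544147472495, 04161460288500782310, 05444009158425334770,
    17888618122950122445, 02438905924634016090, 10007783106839263185, 11245080700613082915,
    11130352024827927645, 07460525404352142240, 05197337561562969555, 14317240266310088505,
    09591309853892427930, 16283953300334361990, 12193569478393487310, 13677398701800712485,
    16069498283773896420, 03335716750059373335, 00312871100963762940, 05957629076352245355,
    17552070420333783105, 02077118130853348530, 08927435601168681480, 03489926634697204095,
    04667168899789700745, 01868807427280669500, 00109105250903949165, 13571086524660896625,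
    12476300683450193655, 06373239856067047590, 10334085754064835630, 14626513496853532995,
    16305712411805706975, 10815523918128786690, 04007615386774454970, 09092980539209988180,
    15827676763278928320, 07192797035468834280, 02647732921797938325, 17657605720140949275,
    09294663933631798245, 01911130745116320270, 05623729048641571245, 14477170283671200855,
    04545411681037716585, 11703752026803337395, 02977989211567988955, 07293490007687023905,
    06318595616124301080, 15285670954486226550, 17048611765081163760, 12789749041560173250,
    11225892837026394420, 00238626053884073610, 18277305909087024540, 08562163474270098255,
    02784783126175465965, 13933421368977589800, 00532217839988999625, 16396020293329615995,
    11881352896883120415, 09162627068224367505, 10588172100769956780, 16049974025992156170,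
    09903808849248498240, 04036934683734960885, 06650579666298412350, 05555123117003976630,
    18029294811501916290, 07754960859831250515, 12743401549783258980, 01571280331932866775,
    08500828075060901565, 06201378152939943105, 12892244288295146880, 04199432230340198040,
    03444573439766488995, 14056481439286671870, 05503936972096408155, 12059291809386896610,
    10679688298239175530, 07034708068959355455, 17110066433668110345, 10291868818426539900,
    17345707073017070550, 00621211400927407380, 15674439785741435175, 01958096303524663365,
    11336018166727632015, 14159587562925562545, 07064056452792269895, 04700116818337556460,
    09747581934430202115, 13398917816263212570, 04477993795118386635, 02890448520505677360,
    12018370126914171000, 15384042389887026030, 17273354514843554130, 00931596651327498390,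
    18149161824014045865, 08334874568403324885, 06513187063013624820, 01194644384172668205,
    09560142492356928345, 08697529529628499500, 05778547465434147255, 03629703999240910605,
    07814875192680309210, 11496536618497488150, 01064725109028551490, 14792107268621365995,
    15124610141580398835, 13125737936589490350, 05013263601259961400, 11816919554349057120,
    16920194722306467525, 01660355378865659295, 17950572214636808820, 03128131364600369025,
    06843329013927238185, 15231331878158735250, 10441363692350768715, 01607129545750101840,
    07618648290833672445, 02703415671300669135, 13192611764705162460, 04369333904215530375,
    16774506044073026145, 00953733644973019560, 09308899075570068660, 17616306197600996835,
    14628616407696172410, 04816095776519208990, 12651119225187562245, 08817512456814479670,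
    13060505879941652985, 02827994249487587910, 11565928940628667740, 01758533412410340330,
    06912076564624130685, 15764901697600816575, 10162930310717754930, 07931882366688073605,
    14012359494404333460, 08184873610424177835, 10645694296432664775, 16597104575219469075,
    18170411997896325480, 03808736222208882720, 05309417662427231745, 00860601308564303070,
    07260427661721804555, 11603495025342434265, 01393875044468993700, 10999006079104505790,
    08740569377243391330, 15868838382857286165, 05386167600425639280, 04466047098172637265,
    16532137750999103820, 09409056853190967750, 13727334513254450835, 06563676126001248495,
    17789244129802411050, 02340691839492908280, 01140857761438415415, 14352527346160214925]
  unitals := [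
    (7712797551273945405508717734084608252923597889615448634319312392833818939194081865, 1525184),
    (7448971021062264092922214516236945121488862559312967707705193703892626427674752, 1569216),
    (46686609865343217006659223121289829588017555421285709693425948987640879014568516, 1575936),
    (3709152678033936735786161407109874725999379093084634202922930358043761738581094, 1585216),
    (166972751003990870748094100065292122940470369967234738344990384405470181991776384, 1586816),
    (59300024653263315560462321731131986931667169874071298748637187603076655826862082, 1615488),
    (4759058486718114197859316820206040146432529572135522389102856435183482192928393796, 1615712),
    (444846110769650033440471071968228335329515411930693790239455378202706778817298560, 1616256),
    (7737944321796288295174575555128490131148126250640096580520975613408276643305636616, 1618560),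
    (29673993969954272137223847988863157724933578904726140118499214542527669777776696, 1620992),
    (8659631963287619406728970215555714634122527222360971443598606323872447111833357824, 1623488),
    (59293263804275355036292387510839523449151453483558401798720801399231302423151848, 1625632)]

theorem plane6_isValid : plane6.IsValid := by
  decide +kernel

/-- Coordinates of a projective plane of order 16 with 8 unitals. -/
def plane7 : Certificate where
  table := [
    00000000000000000000, 01229782938247303441, 02459565876494606882, 03689348814741910323,
    04919131752989213764, 06148914691236517205, 07378697629483820646, 08608480567731124087,
    09838263505978427528, 11068046444225730969, 12297829382473034410, 13527612320720337851,
    14757395258967641292, 15987178197214944733, 17216961135462248174, 18446744073709551615,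
    10211442062053206720, 05792341376225900820, 16693713526501638870, 14516558587942023240,
    04058035059215883135, 11740627884309989385, 01514267787871102110, 08016641779535912490,
    15245946601904344290, 00801147692221883820, 08199201545358159675, 11279181592246504785,
    03097422930526631565, 13031356996203746295, 05637830465810116965, 17738236701749368755,
    08350186423495329120, 03983812290010967070, 13770544639489950345, 09560974749287398290,
    00447868117634578635, 14813340839351582385, 04637426794782444285, 16336034169768218940,
    07057890314296287315, 12425679403645187295, 02705830792270386150, 06426272720380732935,
    15567992220927352740, 01934009325195241845, 11440329127279712040, 18115760661861043530,
    10910619999825308640, 07680058224991516695, 14479203524119470645, 01219811747959617420,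
    09020655875354001750, 04867871595018887130, 16948313332115984505, 00119507909341468350,
    12013688494242012660, 06053398197168499755, 13570430337690986760, 03420123969973241235,
    09893541791429489505, 03880714172377878210, 16001964073886644815, 17494049344181404845,
    11624965977209009040, 05006383007704647195, 15667833226238890620, 06755482321704073470,
    14621947216702762275, 03177412947246836580, 09189001350988224930, 09239448805735572975,
    01452375456520124985, 12943915525850681805, 07547745043345688385, 16592308977176874885,
    04295490592692839430, 10579457401921204410, 01078192480565939415, 17801992258073042520,
    02925067456835969520, 00701935050262478610, 02109997614143132175, 16898103359838696555,
    13244665251056851605, 15452321672565246270, 14130338492310194010, 06700063505231250345,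
    04783933210626872775, 07295678091452493240, 04549930947221842140, 09361493804822011005,
    10424797866089758275, 08921676505964201700, 12539660924607921030, 17534288836647493665,
    01992131308340793120, 02795562083297890335, 00424580248999146225, 12639086880428801205,
    10132520938307343930, 08140989867666642120, 10975167576943785435, 15302880834625284195,
    13344525614379421350, 14350180974101975940, 16361677169009425815, 05549204670006192105,
    07101118836169050750, 05896309954749434700, 04519414183909370205, 18048601448741855490,
    16123756536612697680, 11855296930895846940, 05382335699254379160, 00588654157150239210,
    16174914403912920225, 10462141518689692290, 04387154338054217655, 02955680131502411205,
    14653134531734270430, 08236393903786666995, 06313829576072708205, 01439375576417884230,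
    13072867841028056895, 09718208695287706665, 07973564947700946180, 18236643801575768955,
    16500403328972802480, 09390180791603840790, 06596047291250864835, 04726176164261346735,
    11507384641499988750, 13422806003831394540, 03291596161906637880, 11898945499594256205,
    03467750239511418405, 01786279354948193895, 14269737718982620530, 15507501838684513530,
    00251344553538624345, 07841988574144799115, 09109565113611868305, 18006245313333242580,
    07573804068376138800, 14933552043516234525, 10834846580654269095, 12828913978500200145,
    12390350083485636450, 00343091692609187190, 06032462663018163855, 04434627668768632980,
    02873512035699022155, 09972324800849497950, 15007729974637461945, 08473717725801151020,
    16225351509286143480, 05248223776451730435, 02197555465556419530, 18203888522466523365,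
    06501168074595637200, 17009861959936825875, 09495173480448484020, 08508699123999391245,
    15396099816915517575, 07722903127549971615, 00187699493036680005, 13323402644930229330,
    11347669359275388780, 02356348660785891450, 05329757286024698670, 03774213149891588520,
    02259828725273304555, 12092891151956116785, 14880263325543507705, 17387973209513179590,
    03638464060435946880, 13687815309760079130, 08950358740655903310, 03116937399424793175,
    07136543967237405180, 16747132945375015725, 12234298261328904675, 01626466819382103000,
    06894202580242097265, 15099235377749620485, 10729133633516472015, 00747524040005815860,
    05124209443509020850, 13895629374149226390, 10242166753303793835, 17703833883600215145,
    05488100697586400880, 15845898148849165080, 11573767497683423835, 07446951246748794825,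
    01837587576676214205, 10307395730928181575, 12789483986546264100, 11102257984296213750,
    16557094012972071690, 03960290925070748385, 00964187015078646915, 14025544405508692335,
    08411619794429632725, 02584931043895785390, 06794244635926908210, 17884597887479269020,
    14214191368862013600, 10603845233696031765, 07238287749878051565, 15905176728312493350,
    02406394930486619865, 04154238074959431675, 09795661492334738700, 05462587782820260225,
    08795061784081679295, 17102323498748941890, 01313901482395401300, 12114040098454380750,
    06263520970255421850, 01142028517066103400, 13731498107270762355, 17331194770054081335,
    13154892681982094400, 08692868656184618265, 03532938349371114090, 10808318784883274100,
    05915094413704740840, 01708005453802829475, 15717624684059532225, 14082167939772926475,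
    00884146338079647645, 05757952843844775990, 10048316121570926325, 06972064317511914450,
    12482957909383547175, 16850907125813831775, 03339973084691694780, 17625723885018944910,
    00541464731264336175, 02048739477834662130, 02610500679235460865, 04237181391749641545,
    05089223141001995100, 06373739433639582390, 07919898560689294245, 08742103573713042570,
    09590211102590568915, 11170870955197405245, 11766726394252224120, 12692825608418786670,
    13961115319804253415, 15201905061895237275, 17262688613896857540, 18364758544493064720]
  unitals := [
    (41425540453696055867078254691183498781764108928907800589528351642946963360464896, 1576704),
    (2160252500857682718369825310147639806459362018387997875568763505090554442382579843, 1591488),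
    (231598977821668611077367438043393628961250944930510326782360785830485991245838, 1593696),
    (9560315964865162260738472525166082719627178265562339685122154957460823715239501924, 1595648),
    (1958685626406006727571267903499375368652239516164609470741149313834718577292087296, 1600256),
    (10439887701102457796239463783296211263031822764042304734899199857053803644983980049, 1616896),
    (8302135421834817362757004944250049494095692430100536695855836061497802577558913283, 1622976),
    (7945481518033908486329246145243093904506861581987385091609332907372146592430950208, 1638144)]

theorem plane7_isValid : plane7.IsValid := by
  decide +kernel

/-- Coordinates of a projective plane of order 16 with 8 unitals. -/
def plane8 : Certificate where
  table := [
    00000000000000000000, 01229782938247303441, 02459565876494606882, 03689348814741910323,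
    04919131752989213764, 06148914691236517205, 07378697629483820646, 08608480567731124087,
    09838263505978427528, 11068046444225730969, 12297829382473034410, 13527612320720337851,
    14757395258967641292, 15987178197214944733, 17216961135462248174, 18446744073709551615,
    10211406864799361730, 05837377166341176420, 02858655522759085590, 14543015036628922440,
    04058035059215883135, 07129016632677484545, 01543259707603367070, 17240013816625567530,
    15822404034198045420, 00224827883565245865, 09135953514833948475, 11279005742057278800,
    18047403368677123725, 13041490095298221015, 04629021915896132085, 11973066228499569075,
    08133837719420437980, 03983741921256303870, 13768571059067767170, 09560974762172296080,
    00447868117634578635, 14813903789314422705, 05646233109200554605, 16338004494068314425,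
    18114227368620777555, 03229328827123020975, 11929203722487796710, 06426307883328316935,
    15598954807667941140, 01875464732015497845, 10647730777771466280, 07059599498526920010,
    10883035452074142690, 16902867303293499495, 14438675594239094325, 01435984530073418880,
    09020655875354001750, 05444332345715867610, 07941114077458878585, 00120633465919362750,
    17778331180223831460, 06111939698777123115, 13572228176641353480, 03419951376712451475,
    09891565970644988700, 03889932409145672385, 14993157759239952975, 11729547374162773245,
    17317515356449514385, 04972852302983038635, 15667938777744546930, 06755482330300323870,
    14621947216702762275, 07788254519266110420, 09190408725854999145, 09311714205592090095,
    01452234535153482300, 12943918137150951885, 12159426668021532480, 02759643459192557445,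
    04510537338266133510, 10552441782792351930, 00853012499214192375, 16716624734991825240,
    17913044814748934610, 00701937249017278305, 02108730976685022735, 07674766988392363035,
    13244665251056851605, 15420796509487253310, 14130332445093757530, 06664036907503977465,
    04785340220443448775, 02683992279082900920, 04549934247216343200, 10082456773294270845,
    11431774539437554755, 08354222997465319140, 16202354059055332230, 11625566331695804460,
    01200345497384406825, 16630408688750108895, 00424580798754961170, 08058926016443362485,
    10132520938307343930, 08864660933288596680, 10975167276396721515, 15302880835601529075,
    13344525582179746470, 14350357240896738180, 12542587300798594455, 05580624314382182880,
    17475047121960897150, 06011440916805487425, 03583228441434496605, 03096650686291239180,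
    17585770839169093305, 09390180738973715670, 05803378628296124355, 04870291353092205855,
    11507384641499988750, 13422805826942914785, 07903282180434686520, 16510629938547421005,
    04260383876957500965, 01784872323678800295, 14337852464309712240, 15509372314121790570,
    01041444813160192860, 12422290132664750475, 08204333891941587090, 03019678625885928180,
    06501167593559301840, 17009858661452274195, 09278437749723456180, 08508702559167921165,
    15396099816915517575, 07722903471147354015, 00187488438343754565, 13323578523833660505,
    11343165759648006060, 02573084391510919290, 05329792461806852910, 03778716749518971240,
    02259828725280615915, 12092891152711091505, 14880263325543536370, 17387973209513179590,
    05488106190765686385, 15125322208573662120, 02350397659784797275, 07445543874012749760,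
    01837587576676214205, 10307430915297128775, 13721658259614664740, 11104791270092462070,
    17710010041494567690, 03951284086593260265, 01004714601361613955, 14025403690300479855,
    08410705000822431765, 11781281482986336990, 06578072333775719730, 16731643397524637340,
    13154892680630480460, 08692868243867758065, 03487902353090070810, 10799135663781716340,
    05915094413704740840, 01708002017720989395, 15717587300697717705, 13942556359394281995,
    00885061101689205405, 05757210536057081910, 10300518800215300005, 03153047017873822560,
    18247002482458070055, 12181237455457577055, 16382397627098596530, 07249438535939003790,
    00542029837392003375, 06409768230652246710, 12531584579116682085, 03606938519446969740,
    17950097609844053040, 14214191313027442905, 16125199093720856145, 05382335905399180440,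
    02622098131823294445, 08950358739900901710, 10835021403003085335, 06952670045087743650,
    02224577041577370570, 16980758704883799300, 09451503543722512635, 12794819891078270835,
    02089271874480996450, 13888852119239415015, 12651002595469459140, 16241453384858903280,
    00343093913107250550, 04154097337481562075, 11182717458965162625, 07496739312107631405,
    08236394316103523235, 10003814813785116510, 15243350419796588805, 03267265787064161865,
    05123646493555566780, 06260987685549691290, 13076243341725330495, 18315021736386053400,
    11832394972462505730, 09590218799166721635, 10445791209015547965, 00588618972660735210,
    07152168163106892375, 12887460773656016400, 15903206334757119270, 03317665232659446225,
    01626607006577773560, 16822263382284537285, 04435195016667902100, 04742011843514722185,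
    17861491183271170635, 06894202550110217340, 08822085546509419455, 14652571603255685550,
    04237181391002006850, 08742068260491935370, 12692825608418786670, 12390349769919441945,
    01313899283439265620, 06313825178026197165, 10730542106301040335, 16016535947571069360,
    01110503319674510040, 05250194101291848195, 09691187149063099425, 14053431282967637910,
    17084566790568199035, 18204029258881120485, 07327540342138591740, 02415272799921662775,
    05089223484599399250, 11550553625023342200, 15201060637770411675, 10458317173178483925,
    16466982949323234465, 13620261319644489210, 14933552181487864605, 04387146695948443575,
    06825096197435372175, 09755129095795358985, 07623175192888492515, 00747557025359890740,
    01979667343969802310, 08474843660067732000, 02890562510093983950, 17570823497090111340]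
  unitals := [
    (9974975140981607849384174123911652061123948216566714451406918487903110902518653572, 1610448),
    (12568789887787043237402679030480157179116732309071323929308032244300492655650999041, 1621824),
    (1950000431590881948138459282184247821381990763080043960808701908917915654987711174, 1623024),
    (59354442591119291996801857650162914869382968520956735353883214044269887489050787, 1624128),
    (123608135766417924758970824187917407445092824798156693904160534260916491399956104, 1625056),
    (995098096858044837922532100108454949264782811151768632542497252828525184977036, 1628288),
    (3854857186096623068953896375167979691165991081645407895360714092516314767679309865, 1629888),
    (8670745517869976443808702141663606016336035567576644506369147779165490735854125056, 1634688)]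

theorem plane8_isValid : plane8.IsValid := by
  decide +kernel

/-- Coordinates of a projective plane of order 16 with 7 unitals. -/
def plane9 : Certificate where
  table := [
    00000000000000000000, 01229782938247303441, 02459565876494606882, 03689348814741910323,
    04919131752989213764, 06148914691236517205, 07378697629483820646, 08608480567731124087,
    09838263505978427528, 11068046444225730969, 12297829382473034410, 13527612320720337851,
    14757395258967641292, 15987178197214944733, 17216961135462248174, 18446744073709551615,
    11245078387246673685, 10042374708728169030, 13158093547349770695, 14952805540783281195,
    15111658278583028220, 05037301415244715785, 01668923230584355050, 11562479430682277310,
    06368727455519153325, 07579778896647585105, 00207141502429154100, 16869213186505413480,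
    08427872816517754515, 04450843345968359055, 03336146476221414000, 17555514370665308370,
    11005131515468654160, 15742596058296967875, 09217121438414680230, 11775602931445977420,
    02063218813602860415, 13043317632049080465, 14168190087212172210, 09745455765984548340,
    04669654382191946040, 04125716357008768005, 03135748062686748375, 05915125153679373450,
    18239659113948367470, 16633261822122413865, 00098115634280134635, 07996037821283719965,
    14674752874739852640, 17607364298617902615, 03464758431042732780, 07816869962313973380,
    05246868625243394490, 08451570647937324030, 15160229776458682485, 10282500054084068355,
    01370349802527259590, 06480434081005914840, 10465620120498300975, 13472099570818272585,
    12001211284637858130, 03287247593594715195, 17231168871781238685, 00560906594374922145,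
    13559746387112268960, 00825241055689002015, 10872829298650477245, 11697896287130107800,
    09252961184718840795, 04220543036954505300, 08293555577580144165, 01551093206975654460,
    15578278715616701415, 05120415525623045475, 05854745041598865090, 18364117311485512065,
    02642431994160961785, 14537322799977162570, 08053995525651673470, 17148779640751490310,
    12414560494201688625, 12997572979838761455, 02287023257272221285, 05776671576408222585,
    17479622469909001635, 14209681095551631750, 09946081164608789550, 02869086930216089160,
    00481462776709715100, 11440890976900450260, 08672800811015335170, 05412351991666123005,
    03600854677922683575, 16392894413967632475, 15674135185483023120, 07918261788005044170,
    12652988758175862240, 13896811657308371475, 12954562024129303050, 03639010607899125750,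
    02380706231496394125, 08985611466569347545, 17820047322924575580, 05666979771933824715,
    07660958221772268735, 09877770355029532530, 06088473259974361185, 16948751021854153125,
    00966802737109122600, 01796000977011237780, 10750005896037612615, 15488472280451319870,
    08272658780632766640, 17872185312864256635, 09337384240499604330, 03179322155033979150,
    01607929084286311635, 07328728346482884840, 04866960871812593055, 14622421872330520305,
    16009047958565887830, 01096376807845169730, 13378035469347782205, 06627458906691903780,
    11345128771808154540, 03993613963206394905, 16159941406034177415, 11876758642234025925,
    17731689547268927040, 06025199907772573470, 07029965481041978025, 13291307896629168885,
    00740272324287297750, 15405028928296318050, 04264371913462078920, 12083405494477751085,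
    01457598891784785675, 09106714536268481850, 10148389946494398615, 04826457529739013345,
    16790223108607063740, 02371061479971262815, 11505641684632263555, 14796623918943050100,
    12163948975184649750, 05723579253769486935, 15034297972143044385, 11156478935909537250,
    14301553694185499400, 17432258536580088885, 07427268382200486555, 02573135354959826340,
    06775781831444247375, 08903657052115398540, 00659402982327443955, 12843265104842086110,
    02109910501892792505, 04348998476099373165, 09651577760151468480, 16468837775870983290,
    04716021328985898960, 09433415363857939740, 00338146269114372750, 18054409309385077005,
    14422072704583913535, 15803064031224628890, 03411147347941106625, 03879711187366669995,
    06314911511656384950, 12552934963701427305, 01858666883557360935, 13625934141009839955,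
    06961694155638184005, 08506657726434335460, 17035025407148063730, 10660140258071209080,
    01904982252012197760, 02754027903870951450, 08189489377602440280, 10671049866092395830,
    12718660837644558180, 00403984965391459965, 06905321967812057100, 18141150315918291945,
    04502760660096565650, 05283680982458862510, 15915855780070237515, 16337244597861554895,
    09452200244400311985, 14409998063115121365, 12467392700633474295, 07516152074695932195,
    07194833150693575920, 00584731600751572425, 12385344693334231155, 18173612384619927480,
    09566626343347579485, 15534687644459097615, 04542977915863443930, 13717715101474779180,
    10540912352248922475, 02988843154138977510, 05055231889666864005, 06538110459555802935,
    16546492746699420180, 09043861125275687745, 01224514794486056610, 13935457233060474270,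
    08801262858081831195, 02006630876556440670, 07110510659278684935, 11898163334511725535,
    10399506763458137850, 13251119564346076290, 05517423809843948070, 01047440348973657525,
    03945058630352557425, 17971348485053425860, 14070963046775824365, 06718111818354848400,
    02950949097800316780, 15279643085393064360, 16269859346128130115, 10335960864767743545,
    03812007456264756000, 13781752442014623000, 06251528478807703035, 15230612979028638345,
    07713062579782915890, 02696944922896535475, 01330180622059825485, 10920001978362118350,
    14848603444016969895, 11611282514873447940, 17345678238217559190, 05348502115412020860,
    08780916775465296495, 16759965289883616465, 10209498385392148965, 00933414367198237530,
    07217021804139357660, 09676864738487617455, 11197605450630101505, 12816761828333134710,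
    00279932070373513575, 13979647629817908825, 16076258123793362100, 08088348995179689165,
    03080495602789993365, 04083028783733505870, 06667576263884605155, 05599787085112031250,
    16669169298110898480, 17689132051330276650, 12249012886252753035, 02203309977707664120]
  unitals := [
    (65944628426238611510093382438989935276853520058406066513481709274250228284785602, 1606944),
    (2082651181853222609206834350264944761690423433198096750152489523136997119534760989, 1614912),
    (4166664473914065064654527949096083785275179699879920309969970843029498651008732352, 1621408),
    (149112227834717977261748618476398133445218819763490670637222655643830043179221024, 1621568),
    (124825263629592750483123350982747049257014273730842435623078474346651074106490944, 1625920),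
    (471784856222258434459369415759225339893459836452632667685203118438487792046214, 1630720),
    (1993603767409468461850329315158098531922198539100935054979466186879355906666610718, 1635584)]

theorem plane9_isValid : plane9.IsValid := by
  decide +kernel

/-- Coordinates of a projective plane of order 16 with 7 unitals. -/
def plane10 : Certificate where
  table := [
    00000000000000000000, 01229782938247303441, 02459565876494606882, 03689348814741910323,
    04919131752989213764, 06148914691236517205, 07378697629483820646, 08608480567731124087,
    09838263505978427528, 11068046444225730969, 12297829382473034410, 13527612320720337851,
    14757395258967641292, 15987178197214944733, 17216961135462248174, 18446744073709551615,
    09214987872959517120, 11264640900567789330, 09736392465634968075, 01201714446019475100,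
    11662615977631441845, 07937490663758678520, 15419138757628208250, 14569218420780916110,
    18127882231707184740, 04068387220961828070, 12844699773546985305, 05314077320346536145,
    02578027444918386855, 00318827098772501805, 06703634198175922755, 16612217796266072895,
    14059527086058880800, 03806287044621078555, 18051843197576110785, 11459281821552227565,
    13581201666371495640, 15434287963983871140, 06826595735619912585, 00209801393420880495,
    03003570859081268085, 01956891681453761850, 05139708933415144950, 12162922228013981250,
    08173972654239144195, 09292813313919263070, 16519255371117369495, 07895991639232022460,
    15675990556569180000, 17864517678293603100, 05751311580251546280, 09611475417317522100,
    08817604425991630905, 11021185315202009895, 03100139231348617695, 12945637881672452550,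
    07798388372241306705, 00438168121949458035, 03573143118104965005, 12517480572036447390,
    16172974756751197515, 02182761269587111170, 14136683797580719845, 05966490494778644730,
    12606848437419996720, 14415730468978305300, 04376726432386032255, 08883651937263697830,
    17773241567260448130, 05367210953942692275, 12776948856599911980, 06059290037170985880,
    10652531513118344970, 02840183202424751310, 06954290929670153175, 16806035667688704765,
    00946826949056620635, 15175089657189519585, 01580609222470372425, 10358736757035875685,
    02398287642991242480, 13732956318841887255, 15806087090518737555, 12042899754536745825,
    10384410905766287535, 09578329343203551030, 08323867251145637355, 04107780588855199410,
    00788951718058989900, 06893729669902655700, 14247482794072571400, 05203837701998157765,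
    18263970403372033065, 17033622385710903690, 07124444175429813630, 01643294845271999325,
    11106249963337436880, 15233393600424028185, 09094701807141454410, 07231424933573114895,
    06624955453492463565, 14959383797024232315, 01329411318217693605, 09706692967813275900,
    13045992609127952190, 04723709308374645330, 02946703189284926865, 12183001418722886790,
    16706156356052842020, 04417603570859397480, 17350475351009536995, 00914096945220525495,
    07745856159765863040, 09412644991208354835, 12710421133203673845, 02782104655834791240,
    00554269060910866410, 01861818463670681295, 17892118613664972990, 12647193952972252425,
    05901766345303525035, 14866967931487778925, 10680561750380339580, 05556123618800871735,
    03876164253160326945, 16427345331525934290, 15712831829948164950, 08945764497838015380,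
    17634638402281703760, 11923452010717908255, 07539563745501991485, 04824893145447743115,
    01410401129730440190, 03175095854903552745, 01098339261801605010, 11199799216868750145,
    14359166287059064275, 15051988257737428920, 08505974711906060325, 13386773447230873860,
    10185439368349357770, 16225497461827162230, 04507871734167876780, 06545058554144894055,
    01672432268047427760, 08019881591115975450, 00403059950716760790, 06665731027917027630,
    15575265270887152140, 08122492603096732770, 04186534295554033140, 03376457867040923475,
    11987951881079964135, 13041923792142978465, 17969391600218070075, 05458940126170863225,
    16286381120081601480, 11378944153241219205, 09475375296505999005, 13953189745859684175,
    05018729083534164960, 08790217522763556120, 10483031677605675630, 00637900553340662265,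
    10233113409636047985, 13225319758415700045, 11858397812278487235, 15871521512307953205,
    02284625149447854630, 17455074309558875655, 05993740070941103295, 16940118063441718620,
    07694633081608503195, 14800393947910196130, 02332769081593943940, 03954367555291970010,
    06370663533264366960, 03076942991741994525, 11811842377230291540, 18309607786736662485,
    14018478410527146390, 04297831942857742350, 09883779268580433735, 04656301131459161130,
    15307829797407601650, 08489582802180156300, 02087376846458536035, 13633075003646838255,
    10831122525874105035, 17246057325291272625, 00127669431469732920, 07425791414950370985,
    03627536237749496640, 05781159041499135510, 14337313018127372985, 15113698196821980615,
    07630781243481959715, 00237525790393099905, 10926383460959501400, 17664350065387278765,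
    05647856262197354655, 12395634133900482555, 10078064506969459170, 13267326228572697450,
    02125951514964316020, 16905692934048547845, 08413719919575833310, 03420960035027896380,
    13174139204875539600, 00830414927964294165, 01443803719109767815, 14516488848208834650,
    02683450138874407275, 11704362960776564700, 05541857960421301005, 07059959065866320100,
    03470902335770099145, 09964149971936727855, 16074801207686764110, 16767565537352705955,
    06314009708721783090, 09055775911735668465, 11439275140195526070, 17532995950180108920,
    10131945869670544800, 05055810291540145950, 06432168247026348780, 13467610979212671090,
    04568911904970690135, 17366582216017792410, 13895622864818571825, 01755347647030404315,
    08222153485306162365, 07183397119555543365, 01044107483862358980, 12339674721349406760,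
    16475787555019165545, 03310511545267163910, 15547573712288311695, 10776746946741130995,
    16044369386465100075, 06229185596207247105, 07283244713876648130, 00673413349916418990,
    11548705152810400125, 04034207207930784405, 18221099695524116550, 14691258243907478775,
    10571856964604665140, 09310108172771380185, 04830849160803439980, 08687632581947246175,
    02632090567445405370, 13775917873477848195, 01903893650837182440, 17136120271151051280]
  unitals := [
    (8066988801073244938439497422722891250634104844072702619324946432053172145962890368, 1586496),
    (11413714013209213061700621535694668071160579720642815852805853859553138919687205056, 1611776),
    (11510664997367408054861271417834134857928068171990182263358673910398743037165961509, 1614080),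
    (10315758298843160775504054512683907098367762771779441104085848094086604189353902284, 1620672),
    (926350974092732933687590240655048069127225053169419564069851453928984225523248, 1624864),
    (7730345265005999476533264445793101042419111220598868012573571626539024359791526531, 1625472),
    (9607100535565995170411466499240773167279651629952170536166060825161280247872888901, 1626048)]

theorem plane10_isValid : plane10.IsValid := by
  decide +kernel

/-- Coordinates of a projective plane of order 16 with 6 unitals. -/
def plane11 : Certificate where
  table := [
    00000000000000000000, 01229782938247303441, 02459565876494606882, 03689348814741910323,
    04919131752989213764, 06148914691236517205, 07378697629483820646, 08608480567731124087,
    09838263505978427528, 11068046444225730969, 12297829382473034410, 13527612320720337851,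
    14757395258967641292, 15987178197214944733, 17216961135462248174, 18446744073709551615,
    03215159386279449840, 06244326074857877550, 05441971048756974255, 00355055624183199690,
    10498140298055809125, 08348261457029382540, 09940619445873423645, 12491040117390017355,
    13200843636428369670, 14583632926907685780, 15572216346017515065, 07334040682089811425,
    03637787749100773080, 17223512207719443570, 02184060057015429555, 17303285531971250775,
    16415519862525107040, 12125920278842298450, 06983241673531453980, 05161155284663033235,
    09985323102523147185, 15650299142786233470, 02043861178424393640, 13031204011043876085,
    06855545949928163145, 10841535996752732475, 14030240133733911015, 09038356816984025295,
    02448999234988795530, 04257689445861181965, 01047705713449047510, 17657354763639012900,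
    09319763665727634720, 08918132653185540120, 16698661053430514265, 01772954971851288075,
    11741266779271597110, 03046913977806960495, 10799361749335729095, 03954433926785472930,
    14487539970890791605, 05697735858544344030, 12715251890717992065, 06666663289254172275,
    00953889501982659060, 07145876769881359770, 16025823471731957580, 17629683059278399725,
    07237780060921978800, 15905011856651429670, 10178992748234236650, 00729107836325944455,
    13290005677569490350, 10585290737809276995, 06558058688613811260, 13921938627241315935,
    08119247034277303140, 02976947040898403265, 04595114717827164315, 01727330868021926610,
    05106094730001720585, 16513037629761746685, 12581759197169906040, 17548235138350758165,
    06357159717658065600, 09002930083577106105, 00101430634391388795, 12645717706348344675,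
    13895629868914480680, 07463560297166482605, 16306348374369443205, 05273575136773853670,
    02651062141356890430, 09647070777129020175, 12906487966677203010, 15421929204686078970,
    11217455178228121425, 02127665338310657175, 04490845089745626900, 18065085074343649500,
    08539415673675529440, 02701565697645857430, 12233709576992813700, 06299142653632227825,
    15792012115224829635, 05241686923203645210, 14096695591780820955, 00884272513543633725,
    04440340432333485660, 10383652457825078655, 07085563205823993870, 16875189692756944200,
    02300402104183870245, 09513675421102367145, 13761250736081027175, 17425377793870288050,
    03871016394300006720, 08857223652781364310, 11472716231122162365, 02816092315626353640,
    07605919046529470715, 12398262105464006865, 00608863762740037935, 06052383291831209220,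
    01358379992673434490, 15114796399038231975, 13132842679054401180, 04654110467648841525,
    16459794807080454675, 14780905544044621710, 10278855446789818050, 18111790452951997545,
    13394654695596918480, 07789041144031078740, 14338019014422868545, 15014658090772083090,
    03965817687072101775, 10334936531149299255, 03294287010722675715, 16974590640106395690,
    04718635413967954125, 10611181965248891640, 01456227006060932460, 00193570733308605465,
    11928946251930617790, 06545582054245933035, 09089396670520216485, 17924407680519840630,
    12093652585349041680, 04852884978507228855, 15744369225702146565, 00862303112240718750,
    08446149815408327130, 13674168644854618665, 03760184403666767985, 08050851541810754760,
    11268467481955223010, 01849697623933316175, 09372156143389825020, 14475336701067612525,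
    05786034355434666150, 16251535803203333940, 03315759035934604635, 17770401137218227075,
    15345481851129965400, 09172007164723418625, 12757093063582521315, 14366252559337459770,
    02754888819583670295, 01203544825566643710, 10963440922426129620, 10078674638390524230,
    07900035835889929845, 05966486975580561855, 00402082413362843490, 04215903645355670985,
    16823304103731200940, 11772637118160430125, 05541400417672772235, 18310718235182670480,
    16115253603521489280, 17083695472242208950, 08669821510326477555, 01643254842584762205,
    14162589022355354370, 11545244672652827625, 11100752267438138910, 00267444419620232865,
    12868773110031951300, 03128117418523099605, 05904173082513722520, 05040562686592096380,
    04128311438817021735, 09740223731906311275, 07985036590984837695, 18190698719565880650,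
    11383760796250822560, 08367662654275388715, 14958714111040310550, 10104511095155531925,
    03487067397471304890, 13091675047218041400, 00707846778056845395, 02586505085383372665,
    01977127255794120420, 05388928040243281650, 15169044508310563425, 16597905410957100255,
    11614137434566572300, 07497600532820925255, 06823358533607265165, 17818107908524966350,
    14649636201441191280, 06093548332573995735, 01106716071300442860, 03578055245425576950,
    15558409625503795380, 01540852285837324425, 07707077093186433315, 13557784950472135455,
    09473797742120016990, 08771967942058405170, 02346212067267685965, 16777125387745621905,
    11967057210343399365, 05548768149273692520, 11441418716028523530, 17455525569098172075,
    01884586964272760880, 04385124523509875310, 14202614345186174115, 09709691791801997940,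
    07011585997011723225, 00559006731792692805, 06735846855780133650, 16209092131813841355,
    13799157002780524890, 02929046077242971580, 12386078307813502455, 08217009678368292765,
    10688093126351781510, 15248157759301513455, 05637832695880584225, 17971028600768042760,
    04785874746973746000, 01370387857786163910, 17051515355882893575, 00444076190556483000,
    08184517177899735630, 09280768839259606995, 15366403597486169115, 07727928377948030850,
    06419867858654211690, 04106563345969489125, 11867554049181882015, 03445738998518481060,
    13428751414830434685, 10920754331186588460, 14877161044037155065, 18296089403505341745]
  unitals := [
    (7887779737635713478458032940208309169594292791537998723447783982593468321778110979, 1239360),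
    (1282050016245711067787067785033724710609126069966449318003940560232828378619844884, 1407200),
    (11873820215920700936345361377760225327475508846075369012067096537885142641266919104, 1439360),
    (3794298760496914864627831016166104136239838668188253775537209058733529643716100484, 1553664),
    (8561297998874043998984497982217228052482311150104873530982946804240697641584824394, 1569344),
    (7461918752204431155855523908208545101315061570183104701851124568414700708466984, 1627392)]

theorem plane11_isValid : plane11.IsValid := by
  decide +kernel

/-- Coordinates of a projective plane of order 16 with 5 unitals. -/
def plane12 : Certificate where
  table := [
    00000000000000000000, 01229782938247303441, 02459565876494606882, 03689348814741910323,
    04919131752989213764, 06148914691236517205, 07378697629483820646, 08608480567731124087,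
    09838263505978427528, 11068046444225730969, 12297829382473034410, 13527612320720337851,
    14757395258967641292, 15987178197214944733, 17216961135462248174, 18446744073709551615,
    02924821793289232890, 01062223018477649730, 01604750039537429775, 16898279281698886755,
    13244676246173914005, 15812604832365300030, 14152874082649868880, 06700054709406676905,
    04821369030335780295, 07295678228892025560, 04599461759914797180, 09307503387193875645,
    10422275586684075540, 09011748498511808235, 12181343257897597830, 17534288836647493665,
    01848851749097852715, 03372022212830793855, 00370537036400931825, 12639280394474228805,
    10132529734400419380, 08139670470763156680, 10975169777158223280, 15302880820398209130,
    13632756282504994470, 14345817768365576835, 16415718163635567255, 05404913561680506345,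
    07100555886215612190, 05900567263772445660, 03944080019236039005, 18048601448741855490,
    10892042651328842730, 07682033016594479175, 14479203180806778165, 01183783569684386700,
    08926079802142630230, 04867871586436620240, 16588025361935810745, 00118698669052122750,
    12518098240987337460, 06053398342666808355, 13572391866165651720, 03420181144477185435,
    10251208547373348705, 03826664366995427010, 15700222898847578655, 17494049344181404845,
    11624952808721841555, 05006945957654398650, 15433646389213009740, 06467251946988906750,
    14617531578005938980, 03176577318408678240, 09188209704094718370, 09239624223482619375,
    01506418660537840185, 12944073584925344205, 07547747242368850545, 16954373740977143685,
    04510537267130778630, 10547934404089737435, 01006135505003564055, 17801992258073042520,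
    07578307667735073840, 14933549844492987165, 10834828988468290215, 12828914665678190145,
    12391757458352411490, 00343091692609185750, 06032310930414096015, 04433220225165602970,
    02873512035699022260, 09949819998194306910, 15007729768596472185, 08474280675670687020,
    16243524236395693560, 05247660414181448715, 02197555465556421315, 18203888522466523365,
    06501168074595638640, 17009861959936824090, 09495173480448483915, 08747389904249503245,
    15396099843759022215, 07718399528191036575, 00185728687163370165, 13323389450794431570,
    11347686951461367660, 02358318985522202835, 05113725240057092910, 03756209720728580520,
    02259829206410303460, 12092732822278620465, 14880265524566755065, 17387973209513179590,
    14214191573543983275, 10600467533992240245, 07238694844058235885, 15903206417971086630,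
    02438764552271539785, 04298353263039502320, 09795661475268377100, 05606894284476508545,
    08795061802862723775, 16814097159866488530, 01313811322542259290, 12118368257258696910,
    06803389975594848660, 01146529299194957160, 13155266057680883475, 17331194770054081335,
    13370907134404701300, 08695401903863030745, 03532938211935267435, 10808314386568364355,
    05969137630598774760, 01708251125930063520, 15735632416814373825, 14118143959965320970,
    00884990758714823325, 05699969333650354230, 09688017654481477365, 06972029133139557810,
    12553058372706928935, 17087636377326807135, 03123800304557622300, 17625723885018944910,
    03638464060436974980, 13759644205379429850, 08950358730455358030, 02972857387131126615,
    07136211227530852860, 16724614947219552045, 12016718104365711840, 02130869977388563320,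
    06894211234600608945, 15099246716342694405, 10726026413673174735, 00747488851601952315,
    05144757554895562770, 13846089848662060950, 10082559446392574115, 17703833883600215145,
    05488100697588170355, 16003524135807132600, 11573760904908625755, 07445497898535301065,
    01981700574319076685, 10307395729735963095, 12789483273715959840, 11161367727677390070,
    16556953629550082820, 04177870808263918305, 00491311253218563210, 14025351303527733615,
    08410634632098177045, 02553405850804075950, 06722996282446973490, 17884597887479269020,
    00543998349651751215, 06373924151593046550, 07987452559126383525, 09923211685900905930,
    08296141716138394980, 16500403350447589755, 16125146317431158355, 11682309787580061705,
    10462141600293021570, 14669788601227050705, 13422812599294480620, 01514267783592912030,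
    02787193003758582840, 04351125541169471415, 04637426794279127805, 18296608748192473920,
    02080299722041950450, 13961117510239663335, 17262688615239295680, 05769823360909179210,
    03983803493834124510, 11855296518310538940, 09390040054121775990, 03094889655745672845,
    00250781612175137625, 15566021896090406820, 13071746339167725375, 05277623861091545445,
    07901507353680844035, 08569133158327715985, 11224156538439457320, 18315022900261379355,
    02611061430417284865, 09644254298119026960, 11386990960754038845, 16693702531393752390,
    13773640864233507465, 06235759319987483595, 05382089408767207320, 15245946593850973410,
    14796686778446639550, 07057890310017048660, 03526063955382015525, 00657032641584981420,
    01786279011356053095, 08236393628909022195, 12425591786312348895, 18114569070145028730,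
    04237181400306218265, 09102402195421576320, 12744335529149493870, 14515995637988610120,
    09560974749277997970, 04726184960438240175, 00606668572839586275, 08016641779787570730,
    03243910506044032965, 16336034173794750780, 11952988006585757565, 11279234162646207825,
    15508733291707884795, 01439195256502540470, 06570352724084499975, 17733119643101444820,
    05665683893171204700, 11766726670736549400, 15203224458668699280, 04058281349702802255,
    00808156089166198980, 16174914403908005025, 11507384572780577550, 08199193161582010170,
    14270298469912786290, 02705978126822218470, 06313831766506029165, 12975906427670797815,
    10191086656161608745, 07846492173755392395, 01884469707819370965, 18002324661312161715]
  unitals := [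
    (2374461529922742198950221361680165239399454096309597472644741925463997552407953801, 1619968),
    (3814922403088964496956311730620276371933089370813488803573927822796862646519072869, 1621184),
    (8582147805786218749565746679944176789266707055707157682432831877951427670977351969, 1625280),
    (3149600010086041504013776100228125103305254125394605167460619873956254896239943680, 1626560),
    (7650756070091482183475088278693036684111647571312633741195863849909237133402052744, 1632160)]

theorem plane12_isValid : plane12.IsValid := by
  decide +kernel

/-- Coordinates of a projective plane of order 16 with 4 unitals. -/
def plane13 : Certificate where
  table := [
    00000000000000000000, 01229782938247303441, 02459565876494606882, 03689348814741910323,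
    04919131752989213764, 06148914691236517205, 07378697629483820646, 08608480567731124087,
    09838263505978427528, 11068046444225730969, 12297829382473034410, 13527612320720337851,
    14757395258967641292, 15987178197214944733, 17216961135462248174, 18446744073709551615,
    03471837068548153290, 01905253898169272715, 09495757215935452845, 05112479280847906965,
    14511820722816498990, 07918888871788737300, 13275878508055710735, 02594521979729336940,
    17701651344077665395, 08975579212750721760, 06600622040572784850, 11694705383596459830,
    10942695586429013745, 01032112891996299705, 16265101360394708295, 16075047223967689560,
    08078045840081213475, 02209389988866960630, 00251120339862727455, 05035545005321056050,
    03653666108159842785, 03240083350203766020, 17946470843542827960, 07723003796061557925,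
    10466934924449662590, 15462336615125332620, 14137004160210603735, 16700333363194579545,
    06739287333287954250, 09969812622821424480, 13792334715322818765, 12168583583164084635,
    15007087465584753825, 02139909769084747875, 12399984460549877325, 11416390944300686040,
    05892106250326254480, 08218282784143962510, 00549931552824963780, 05269233474913089375,
    02586825802703707575, 17607225922291615770, 13446629686249623525, 14256850449314605830,
    04577862571397653545, 16967502151206213180, 09673390082246366715, 07564739222538291570,
    13884478181811635730, 01510373863184377800, 08917449667776646650, 10139381582090107455,
    12899679431558992470, 12573360079773480225, 15589974902634323790, 17765628416341912020,
    00151229919611315115, 03287175286719396720, 04028744940464161125, 16875581494878799005,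
    04714040089913581065, 10746653357629108455, 06473660300839251075, 08016541074449324220,
    06943658027720620695, 01961028057414623865, 11943027027435652740, 09034307693011643445,
    15561245005834641435, 05341093479364851150, 05992580089179963660, 12872160120315825480,
    03925554588537409200, 14886422368364796015, 00704103620131149030, 16468821183693476850,
    17888794109235075885, 02438905924634016090, 10368015019115558865, 11244236275687108515,
    10700260459433106525, 07460525434684365630, 00587338193967367635, 14317240235171837865,
    09588231221468873370, 03601924501805890950, 12193569481883934480, 13677398694284257575,
    15781267770250340580, 03335716754891408325, 04780441381693698300, 06894202357790514795,
    17553752673122183745, 02077118130853348530, 08855430989847311880, 16169534308527972735,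
    10441416473203868235, 01607129545750626135, 17382245672364369900, 02890448314347245625,
    07814875123860627930, 15188563953163896255, 00342136039245520245, 10162923705058049730,
    06513187064892890100, 03860342097458420760, 13727334513259673235, 11813154826535511150,
    05464333749110491680, 16836380908681754625, 09177800426802792870, 14351680175940674445,
    05778547465426807230, 01758533415362409450, 04278222345582225165, 07640394046908480585,
    18313051850400353595, 02703421151678942895, 08740568896441476450, 13195074739464565980,
    05522255408050625415, 12018370127081902200, 15123202745222011635, 17283623926754210325,
    01007180329770714705, 14012639869869416340, 09553172043949080870, 10645694227713190080,
    17349587128647368325, 01868771074674330540, 00109034890716168045, 13569397657623384945,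
    12476297383036287225, 06373237657076562630, 09397337031813993495, 14699415458376405315,
    04200036616889918175, 10815522829958556930, 05160536878496884410, 09096023918676197460,
    15323439631269226800, 07192797035468834280, 03437833181424028830, 16504684215528265515,
    09294663362399095785, 01337203267603294725, 05622321691105659165, 14477152691284833360,
    18092237143965043815, 11847868391700230835, 02977989277610190555, 07293490074628074945,
    06318713263063166760, 15717910965695831670, 00907716541573056510, 12787338913682700450,
    11514123213176615220, 16379405072587149450, 04443655245331371420, 08562163474270098255,
    02783371490685121005, 13933423568201450040, 17826040408993138080, 04866875408236280955,
    12385747877526690255, 08370028709590035345, 11166321840372073260, 16049977321975854090,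
    09903815446318227525, 04036653208761394935, 06651318538112318745, 17084162238527688630,
    01095760624905689730, 07106618433638805075, 12743401549783258980, 01570435924048386270,
    08500828417854552765, 06201378015601673265, 13036359476236526985, 00812725310422056600,
    03084219502637278995, 14056481581026884085, 04351010068715669595, 12057889930182892770,
    10535573109090646890, 07038648701446094895, 18263111083576807950, 10291868818426539900,
    04663694767390528470, 16758171390547553700, 15675665741206405575, 02246326675314300480,
    11565929335732104540, 01393875057353915940, 07618648290829517565, 09747248026492737795,
    10998970894665308085, 04521797474554608450, 15384036892331508585, 18225419218551152790,
    13125738417625827870, 05565419663400145320, 08184873610422080715, 14916849528868857210,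
    00783227308202731575, 06060680342619567855, 16352984026718846160, 03128254501307502465,
    05975327844010117245, 13398917833443057210, 11205210017602942230, 15868838039259903525,
    14792107268618201835, 18065988049264955730, 05246143119516082785, 08333185718576615385,
    07931883466199963520, 00391236688114383180, 09308899294512737460, 16597051798527118275,
    01660357714254126495, 12650996079885271815, 02340533539885376760, 03807276118005559470,
    11336018102303122575, 10064545647904514910, 06843329151366189735, 14593339402525053105,
    13062300270033281520, 08697530624845164060, 02827994249321953350, 07260427249404968715,
    15235272524342282130, 11603499423392877525, 01194626790382302525, 05726803181342887395,
    17496585204414027465, 17017490493557913960, 00498517785510632490, 04115672489029241460]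
  unitals := [
    (11920137161104937290025548659261924308455432192269669343443338993052158119163236392, 1507200),
    (59296640369810275480144132218487455484160520996012819558345494603625861323464729, 1527040),
    (948632578331497148231879671127177284206981526752056447257138037600825247428905018, 1601920),
    (1026511345101688421218663682114961064176163201135197163065663784594302141013688328, 1608832)]

theorem plane13_isValid : plane13.IsValid := by
  decide +kernel

/-- Coordinates of a projective plane of order 16 with 3 unitals. -/
def plane14 : Certificate where
  table := [
    00000000000000000000, 01229782938247303441, 02459565876494606882, 03689348814741910323,
    04919131752989213764, 06148914691236517205, 07378697629483820646, 08608480567731124087,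
    09838263505978427528, 11068046444225730969, 12297829382473034410, 13527612320720337851,
    14757395258967641292, 15987178197214944733, 17216961135462248174, 18446744073709551615,
    08117400912296840025, 02708696125032618735, 12039738227684500620, 01403958058877820480,
    11516120876289635880, 00748973421775865745, 09438420952169202615, 12779426297725579470,
    04309753549436033190, 16432099655884418325, 07846107767650690365, 15429411168712319475,
    06363075263003887995, 14787728454198583140, 05673716363241812490, 17979325495696604370,
    13447684883669605680, 14981902216558101105, 00968859699111684345, 07586046991778070300,
    12392007208472946525, 10502098175148657735, 05774152703111164815, 16022720145129519720,
    01325113375149512100, 02651914704903049395, 16732797868152976530, 09786380739861748170,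
    05046382862252822235, 03824837004222704430, 08324248448438698470, 18206805563715151365,
    05440521842892993825, 13687990961618196090, 10118023710716572905, 00114330227804447700,
    03806212025529863775, 14075753286672378765, 09154923419196352830, 10998888516153581820,
    16873220327355792390, 06254360986756175640, 03329296366776910245, 12244503512603842635,
    15383956098633965490, 07068482352696949440, 01175340424707687015, 17848148529560702355,
    04357774873281380715, 15530364502599307950, 10827423228861371370, 05349842954524584735,
    00209288070264650835, 11749655607336949425, 16191448212253842045, 01989579479672041605,
    06892775454250876230, 13313821237210412505, 08173285946648489760, 07986517913059272855,
    03021945781552006200, 10182993449832918540, 14131067983247542770, 17666167895080765380,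
    16642987792980090945, 12519136630158918930, 04078865181128614605, 08447048331547299210,
    07677842319965885685, 02540477076296677470, 13365082112572556070, 04782786136802603385,
    11242502122902355875, 15305546198687283975, 00514446034233745080, 14889096644154267615,
    02288533223247178395, 06617498224422440160, 09231912818464859700, 17430191742111635820,
    05850295182629808825, 11131837808223576660, 13769445426661742595, 15629059669882290960,
    08371939088261363100, 04133935487094259185, 01561984958136806520, 01047739127442389325,
    06988311827237261790, 12414405157237362735, 14308372877479380135, 16344872313596977035,
    09489874194957793125, 05172682224973489890, 03243708741456513990, 18115488504405397050,
    07438277854849716315, 09028379118864968865, 16941972832242697065, 10661249288933698050,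
    14439179337419275710, 02030572946949732570, 04745818949326428150, 09873768507226842495,
    15044193885263644965, 00412202384315224380, 06809329228074624195, 03425483420968844820,
    04242624628907619975, 11985048162593112720, 13015727727059390445, 17480124316680592200,
    02334502391616154875, 06421137680499277485, 05595558868839830430, 17041972441193277360,
    13101818487763493985, 10348625683834519890, 10948043747088206805, 12550271076697329465,
    08553497402358970575, 14012486166386028570, 15794871943631435340, 03551870982286120200,
    07188003331881274740, 01898545697607002595, 00359896645874930310, 17872850042118560295,
    01779048474047590230, 03606703465829795820, 06738715549370409015, 12641073588674991045,
    09544805476347951825, 16671034852460120100, 13896186468871202115, 02804809406841298185,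
    00703080743257451370, 07038897920685985410, 05040345522382158240, 09120717921913271835,
    11180398708834489470, 13562412821925724920, 15211476088952872095, 18034245579281101245,
    11687339092332636630, 05481769213909179735, 15690401988660191460, 14631691953693499800,
    06310347803087769345, 08717484275098984035, 03088150036023800700, 08022203015013141690,
    12747470447657826210, 01479400308078565065, 10252842923477687280, 10763794664083572765,
    00264856506686600235, 16268494342488371775, 04406349476350511685, 17761356543034074510,
    00602861669614569135, 12844538939146333845, 14235724910758077195, 01646802905124862770,
    03221844857303030145, 15063397017329218650, 16835110649660232135, 04033015634522270745,
    05703031139949510765, 08926421630582299380, 09998863869144076110, 06010484364711826140,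
    07898927856292837155, 11391802765325878710, 11561974143479053800, 17599150236732336240,
    01658671164738352125, 09306569812916661675, 11858083170970270830, 04892793034989449160,
    07742688405991246095, 13154691199415700060, 15179800697611421745, 04495150746028363890,
    06700690355702872980, 14606588888112684585, 16522598908704556755, 01097548508447249895,
    02891150004107405130, 08780018188465447605, 11369941420600652160, 17316968082874078230,
    03124068986808528855, 03937580833157740980, 07258067295622325160, 09649856808903536790,
    10393620909877018305, 14493989706502182480, 16087802773818681225, 00927661573015964190,
    02231028345403346220, 05220130189209951285, 06487226342023862370, 08272659012328051725,
    11637871663927642995, 13217108387996508495, 16399983504984393210, 18235296256096678635,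
    05290536460468816515, 10688740636198049595, 17253326760615435180, 02155348714253354175,
    07278296241682575945, 08796268282170261720, 13975753949368580325, 02859368747005457760,
    05961144159355127550, 09673708979814374445, 12911082105796602135, 00812189071109975490,
    03498257262474289050, 12166470353632276740, 15894352689017073270, 18359108176714163025,
    06116944417165893930, 08957808006919213890, 15776511929934775755, 00439438353900027765,
    07506467755221031905, 10062413192884015635, 17108907470753069400, 02411877661086975645,
    04655300814940137660, 11945405795675422455, 14361382818979969590, 01816405096323172110,
    04591324292991952080, 10559559387494264175, 13691643490719833220, 17572562104686657705]
  unitals := [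
    (474322633441104845793471181874719263640737475477472526097813820948317084492056872, 1621920),
    (159446463354539159558883947496226334542387973497751163288811944137476572594046610, 1632640),
    (7829991836177216649208837433073966118731519940227505446554967350264230701773841472, 1638912)]

theorem plane14_isValid : plane14.IsValid := by
  decide +kernel

/-- Coordinates of a projective plane of order 16 with 2 unitals. -/
def plane15 : Certificate where
  table := [
    00000000000000000000, 01229782938247303441, 02459565876494606882, 03689348814741910323,
    04919131752989213764, 06148914691236517205, 07378697629483820646, 08608480567731124087,
    09838263505978427528, 11068046444225730969, 12297829382473034410, 13527612320720337851,
    14757395258967641292, 15987178197214944733, 17216961135462248174, 18446744073709551615,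
    02924909058609865200, 00700527676972760850, 02110560220499182095, 16898103359687703915,
    13190635249667938965, 15164078153813870910, 14130338492310181800, 06700063917548110665,
    05054157984353736135, 07295678089841880765, 04567945345731061980, 09362338229752142970,
    10424956195764155475, 08921667709871703780, 12593704068604623750, 17534288836647493665,
    01631843338153447200, 02840598101046431775, 00424583508885615345, 12621072481919581365,
    10131676513377211965, 08140426917545451210, 10975168663572608475, 15302889630717782115,
    13344525957993581910, 13980885834722366340, 16361677169160418455, 05603234671395104745,
    07749637182499981950, 05896309542432574380, 04520821627512400200, 18048601448741855490,
    07573803607204024890, 14933552043658877760, 10545859740502650135, 13702612237322815185,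
    12102225260450501730, 00347437001214766710, 06033857943408355215, 04433783586097836180,
    02801454437366008155, 09945312823728132030, 15007732172595343785, 08474948113638816300,
    16269262017969407475, 05216839297489574925, 01981383784562779080, 18203888522466523365,
    06500876704014734040, 17036883420261767760, 09450149578752355860, 09085159876302642435,
    15396047112289566855, 07122517002232421535, 00476492816423904165, 13323399347733329730,
    11347669336355811180, 02356260768466094205, 05330662201274219310, 03801146769545720250,
    02260110595386967275, 12322574732717163825, 14376029118406534905, 17387973209513179590,
    16069783710902171160, 11855288138024063580, 05382194961765797520, 00588593684010719715,
    16175477375335214145, 10462141607430679170, 04387154269418430375, 03014226926926628805,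
    14292372032082932190, 08236108717958212605, 06818234911869845610, 01439428349754923190,
    13098482063942280255, 10046971399359986985, 07470850639318758660, 18236643801575768955,
    16498714449058253085, 09750468280755045030, 05947528957911856320, 04726187159369223615,
    11507396650228339470, 13423069886357623020, 03291675670307667000, 11948485111333023555,
    03467694181648598565, 01732799178092682855, 14873772022276797810, 15795556292975978490,
    00251626031081986905, 07792607307897610635, 08560126097048483985, 18006245313333242580,
    14214191368862500890, 10621771671275291205, 07238300941333233120, 15904333385714144550,
    02379373368692876505, 04154236973564583675, 09723604310724818700, 05178861007604541825,
    08804174503703561055, 17103730508558177970, 02178433181664050340, 12113952068812939470,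
    06623246029062459795, 01137512822815033965, 12867035677234118520, 17331194770054081335,
    13154891651189943315, 08692868656218104505, 03542789973555988320, 10808316105897443700,
    06275382388038221805, 01347717484953269850, 15735639354359897025, 14111863551694948875,
    00884322255634640280, 05759008099056316470, 10264479420407403765, 06971958764512777170,
    12481985940970342695, 16793204768475146415, 03123800289693023820, 17625723885018944910,
    03926676844401590925, 13687586663417980320, 08950358739053675550, 03333110142347008695,
    07136719888980212220, 16778657799165358890, 12208402563547021800, 01698542005876607955,
    06892805066603130225, 15099234982478609925, 10729123119436543695, 00747576820861015860,
    05411036018189969490, 13847778629450592150, 09422509422266880075, 17703833883600215145,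
    05479093498390377075, 15557950347185791920, 11573767617942574875, 07950844231621119945,
    01837675537606567245, 10365932630332547415, 12789220052333451300, 11102258016183389430,
    16512058446195227400, 03672060206965824225, 00964185915566994570, 14673957081159047535,
    08411285473630052565, 02580427442926239150, 06218638204157939250, 17884597887479269020,
    01045868231247839535, 02080264696583631090, 02611166983275601665, 10211442049168304835,
    08350186423495296360, 11624952782549382045, 10810696383093025770, 05792341376215415220,
    07680046100298840135, 03983741921266789470, 05005820057750705835, 16333425556312000470,
    15649836488634930300, 14479203524083363125, 13770544636268727945, 18144415379432559120,
    04241403516400497945, 11766726703485675120, 17262776576085369540, 14516558587824603315,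
    09560886801242393490, 06710446328108456190, 01218122760660409740, 08172164898028531515,
    13570420443697015050, 02704985267864277990, 07547734078294181025, 04773139340576207205,
    00862019698502487255, 15425644059071576655, 10935925969014218280, 18304997560820512605,
    05665683893175395100, 09591618476131957200, 12742366235112010350, 04058038358120192895,
    00520769724285909195, 14621947216704660525, 09011648676099150150, 15245946567544638690,
    12013688510348140020, 07057890292821450840, 01452656927201868345, 11280764888990500785,
    16952499090831679365, 03420176265444705690, 06471132792120124935, 17467124674744028835,
    06373915767816862230, 08742114568862743680, 16067722073077342875, 11740698253049972745,
    14813340839357873745, 03177413084683692900, 04867871595023065050, 08016642262451296035,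
    00119226434750633550, 16696332034220294460, 09239536746532808175, 13001239173695898615,
    11178436152361480365, 03822397175152266690, 01929505755783637365, 17787560672856544440,
    07919908460320475925, 11445537755908872240, 13961115319806472935, 01541289355537000350,
    04637426793289534200, 09188860613634087330, 16588025362010230905, 00152629414600467900,
    06053397784857930795, 12425459157722250975, 12943915250972791245, 03097716500129150595,
    04294364693859738630, 09892134438020772705, 15621472466502356820, 17810699222504279370]
  unitals := [
    (926564457729326302680816217882949570388998932154435595881580405154486330615825, 1626240),
    (1445567460864494502162851516950631075430942578950715187202701285653560697949258240, 1629056)]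

theorem plane15_isValid : plane15.IsValid := by
  decide +kernel

/-- Coordinates of a projective plane of order 16 with 2 unitals. -/
def plane16 : Certificate where
  table := [
    00000000000000000000, 01229782938247303441, 02459565876494606882, 03689348814741910323,
    04919131752989213764, 06148914691236517205, 07378697629483820646, 08608480567731124087,
    09838263505978427528, 11068046444225730969, 12297829382473034410, 13527612320720337851,
    14757395258967641292, 15987178197214944733, 17216961135462248174, 18446744073709551615,
    10283499656091126285, 05792358959822008740, 16693713526771123410, 14544132140442759240,
    04058027577382984575, 11740627884841580745, 01514279745084170910, 08030152920991538730,
    15245964168589020390, 00813251485587629340, 08799023621216939835, 11281088489006517585,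
    03311625387921536640, 13026853396488950775, 04701116927689156965, 17738236701749368755,
    08350195219520603490, 03969245959966452750, 13824576287998820745, 09560974001963133840,
    00449275492509153405, 14020654554154434225, 04637437789999348470, 16264539525146841660,
    07994639019606310995, 12412168398873082335, 02705823121374909675, 06426219943871882775,
    15567182980369244100, 02123160921861661605, 11152098710599489320, 18115760661861043530,
    12561714696748560795, 04979361435710240370, 15667867311104594700, 06543812933059004670,
    13973411346898382115, 03204400116548975460, 09190127250878288550, 09238881457476511215,
    01451812472744544825, 12943915457198315805, 07547185434863200065, 16628303663548796805,
    04296052992890447040, 11331558530850484410, 00213555231083023575, 17801992258073042520,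
    02925064115351413245, 00701935050258939810, 01357896476372259855, 16898103359842923360,
    13208073506232081045, 15452321706869410110, 14130338493149034330, 06700063538517246585,
    05648623900995343815, 07295713617542917560, 04549859478983076060, 10226114564532968475,
    10422933094369054275, 08917177373102802660, 11605445476909448070, 17534288836647493665,
    16500403535130182070, 09318123197465249730, 06596891724770932995, 05374694510015515935,
    11507402233685750910, 12859301896548634860, 03362250779191082040, 11898927496984031040,
    03521793443566949925, 01750256742800625255, 14269728921010562475, 15509929568948564730,
    00272455030763297625, 07788050932269491085, 09037497263192299665, 18006245313333242580,
    07587262090750447920, 14931030865769663250, 10834846992971760135, 13404846930862552785,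
    12390390765365532525, 00320573694472007115, 06032990411423821455, 03569936540309307540,
    02873518632769114950, 09395864082922585950, 14994218763438515385, 08473717537623702060,
    17090042843081819640, 05250757048825552035, 02220066866623506810, 18203888522466523365,
    04487674065167801730, 12823134867183576330, 08950358706400956750, 03157469793108945495,
    07136543625955734780, 16746007045476530475, 12184758656938951395, 01626502028986731480,
    06894202564068860865, 15171300462210119445, 10731043828811302575, 00963640747026595380,
    05172896917899618480, 13870578101188399005, 09954007295652073590, 17703833883600215145,
    05487537816302124555, 15845334992754090360, 11573205303627469650, 07446952337673670425,
    01837587553859548605, 10307396830166919495, 13699245745874602020, 10480761278400322800,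
    16561575588007148490, 03961416756262648545, 00747982347664528515, 14818142755540898415,
    08412181667755548885, 02544451423817009070, 05965582304490614070, 17884597887479269020,
    14214199064638101510, 10603845233695568325, 07265274163270187490, 15905187723429184800,
    02408365272385760985, 04154238502039193595, 09795661655627349420, 05440077483143840385,
    09080811670591062975, 16310252503042037325, 01890353576011201620, 12163474141507952670,
    06262183964129678490, 01089392352836409960, 13659440513274802035, 17331194770054081335,
    13154822716427971650, 08692868658249252105, 03606385726106534250, 10806348460046344980,
    05856546519037722600, 01708002155158894275, 16005855058164423585, 14082167939336718960,
    00924678854985066390, 05758023006422134845, 10021286828298657525, 06972011197356397275,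
    12482113501633299495, 16823968000010905695, 03053150083423144380, 17625723885018944910,
    00541464728965865775, 06373740739309640370, 07703725778589141765, 08155964746898998365,
    10132520938311276090, 15396944654162473095, 16161403605031201905, 11446748549198491500,
    12012570265197092340, 13344525622969339590, 14653134840972964830, 01440747764781865035,
    03442571599365911955, 03774221945984610840, 05549099116990588905, 17444567692946950560,
    02047314510765089010, 14609633640375800295, 17262688613914355460, 04865338869979455450,
    07722910815541410975, 08140919498921417160, 10534199112622762635, 00119479320965404350,
    02955680268672945525, 13323402644930490960, 15300910511667357795, 03876210538390769325,
    06706957887676123980, 09677687293757649705, 12092926542402749745, 18337692519092630550,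
    02610553318086205185, 09617795650308211155, 11170870963796777010, 00588724525777011690,
    01219811747154016140, 08562742319527837200, 12639086536831438005, 05331164661076024110,
    06313832874607525995, 13570429238175163560, 16361668407276141975, 04447356592018925910,
    07110844135492851060, 14880368878660364025, 15114755359544408655, 18033947381343511245,
    04214680985865942345, 08742103023957568650, 12693944911792733550, 01992659073921732390,
    06789399206661593040, 10910619999811677165, 16087727722413868635, 02746021734435360975,
    07031539878650165415, 11855336513301864060, 17009861977083009555, 00424572552468072945,
    04805874947756524440, 09501647404904440500, 14479203515529536565, 18288759141122322690,
    05089212145898299740, 11780237210314204680, 15778365814198726290, 01052390621491769925,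
    04387154338305875895, 10961656778148705750, 16948295739963232425, 02356348661326956570,
    06053394142719360045, 08236411427253234675, 14350180604734134660, 02259881536191176160,
    07892332901074799310, 09927600263074608225, 13073430790981470015, 17427059613999858555]
  unitals := [
    (136746839995143129090639668394942897062967927454271440613340689912726432636733486, 1623120),
    (2283018120101068344019669489896528365589939669351143196452667072437825385309160710, 1634016)]

theorem plane16_isValid : plane16.IsValid := by
  decide +kernel

/-- Coordinates of a projective plane of order 16 with a unital. -/
def plane17 : Certificate where
  table := [
    00000000000000000000, 01229782938247303441, 02459565876494606882, 03689348814741910323,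
    04919131752989213764, 06148914691236517205, 07378697629483820646, 08608480567731124087,
    09838263505978427528, 11068046444225730969, 12297829382473034410, 13527612320720337851,
    14757395258967641292, 15987178197214944733, 17216961135462248174, 18446744073709551615,
    09973586944680091440, 14376437662520134425, 11858187787260252780, 10868354727972188655,
    12819372232968292005, 00872171582571382605, 15793579151048813715, 02235652615598618820,
    07592852677744978545, 05783420839944655755, 04899047907285700695, 17688733928123933910,
    09134822669078956530, 03256601313864675000, 04084194998450418990, 16336935550563319050,
    02776379970702546240, 05272296844784031765, 11151774374532375165, 00097804809212345385,
    12391145699486759400, 08665187105528456895, 10227431870244916170, 16515856942812404475,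
    15250669277892167430, 07209286161879739710, 13576341006552392850, 02195985489554980995,
    17857217303714878380, 04589819471343554145, 05917388238798503895, 13879368022636360020,
    16090365007770149280, 02659710684143417115, 05870157950730670650, 12062057206498672260,
    10619107984104754620, 01598651070406358025, 12728191058829191415, 05460706883275396830,
    03860129176937217090, 08275957593323585640, 14773982040991226145, 07965500206446849885,
    00644797440916277910, 16797661519030150095, 10138836278669661555, 18028140487602834405,
    16402058740417381920, 04252688699473448730, 14436922172233880295, 09387295622351042460,
    09012280057618819155, 15310172803296291825, 01942594887544787790, 10439828053999723830,
    12409429871382622425, 05092231496409243330, 07480191067278901515, 13081200029467901295,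
    03373340549629779060, 01111567680491235765, 06463764354606892200, 17378386503474461325,
    07003916946363111360, 06692070269533989150, 16961022116068819545, 02890386159028352250,
    15463769109373923195, 12647474613599145015, 10901029822616219685, 14026884417799447485,
    08857442922451312020, 00416106452451130275, 01464631451515408095, 12933529926112270920,
    04537127351739967500, 09234002905449469665, 17946408750066779490, 05598149375507067270,
    05508773871246228960, 15018347132949658140, 08063022247446004440, 01857682474709172150,
    02670473750201533335, 16693769918064957795, 06357293759403377010, 09444325342874840745,
    14686939980540961845, 04190794704325707615, 00180489752992995060, 13711780273956976065,
    10735827662064970890, 08184384398919621390, 18254929768063672395, 12015117551915735085,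
    01791939416118864720, 09176135509192971030, 13347633379453477380, 06602395979355209025,
    00516202231478117850, 14115996146322825090, 04798310442212362815, 03241265185874116965,
    10451399842522824435, 17115350503952331900, 09687975370057579710, 07299687929107106025,
    17349181997416113960, 03778458870821097645, 15758524997249812935, 12543494788541601435,
    12478163187379127280, 16881577442973920280, 08573116343371477665, 05035775931490318605,
    07827661691287804815, 03140122134284132550, 00681313152552345180, 13030574712286908195,
    01327609679572501995, 14933382876586210890, 03465004035051441525, 17549045950398161310,
    09353190286507615335, 15515113378570762290, 11006549188818458580, 06775752598545226425,
    11174993308834527840, 09632874094665687060, 04652070401204732595, 07897082613776397735,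
    14510639289612941310, 13403338041353212380, 03443812561054621065, 03917010373661809560,
    06337884813870180045, 12137591952867454725, 16274138492583741510, 01390431436702452090,
    17501910479168830545, 08948000831717264955, 00340017465773368290, 16012156432829191215,
    04029141652480758960, 11348028035210184210, 15354799366966542990, 08398810596281563845,
    01168956684134276205, 09939741496537763115, 17028880955285798820, 07504075670951754060,
    13168553317426348890, 02550303608734591185, 06889252690627487715, 18107048192051568135,
    05392708860789908985, 11677249464641461110, 13958242144764174495, 01058159852792230200,
    06107210827900287120, 13300955208351878685, 09730896009569624655, 16211416550950583250,
    03636056827477926345, 04714902508375438200, 11951700398696187825, 15673212542738190570,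
    00955784742153199470, 02080756073357339175, 08880898415825593740, 07185789692479544565,
    03052762272776566275, 11504378732731618395, 17733170590695934260, 14854061195596500390,
    08765891715031534800, 07129383747572028435, 00277082770995507915, 13772374264288456830,
    06524610884056448550, 04452219999219559140, 14131133971536516360, 11623668504342326610,
    02341410252964747695, 10040743028182368765, 15628627954037994345, 01565609813374133820,
    16574315327518844805, 05133416129761775505, 18200514137350478010, 11412950089443691335,
    12850163699040086400, 00447474347237109015, 04345563636778750710, 14591632901085411435,
    16774662519090630705, 06978118657626062490, 08287002833351144685, 06731261525011614735,
    05699700431291067180, 15128484604088321460, 10745723840053845960, 01985249899045033890,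
    12243261492612309315, 02861712150488009310, 17627675251201017465, 10276264801675998165,
    14265316889310637680, 11800139560419570975, 02136087744168587925, 15855483525533415000,
    10363831463390222850, 10537121408811288750, 03566929683012577755, 00765098836169573505,
    16439831718906515895, 13195447486214364390, 02973812750413101885, 07744731128539448100,
    06263787155668697340, 08123423400134012745, 17899375317058756035, 05643534521925642090,
    02425200963619082220, 11554301311834031310, 11278955184298337025, 14285965950864526035,
    05991925826112777060, 07643838411128533170, 17253349635106850205, 01698494436514508280,
    04169115962467284615, 00859300919067957375, 09528065605695879510, 05189590973144853675,
    15190561513518767685, 13690489890637748025, 08458745593264197930, 18356050412401078800]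
  unitals := [
    (3768728972696570673075639006530291083738020654162142424421961097203355251704064, 1629376)]

theorem plane17_isValid : plane17.IsValid := by
  decide +kernel

end Planes

/-- Seventeen projective planes of order 16 with altogether 168 unitals. -/
def certificates : List Certificate :=
  [plane1, plane2, plane3, plane4, plane5, plane6, plane7, plane8, plane9, plane10, plane11,
    plane12, plane13, plane14, plane15, plane16, plane17]

theorem isValid_of_mem_certificates {C : Certificate} (hC : C ∈ certificates) : C.IsValid := by
  revert C
  simp only [certificates, List.forall_mem_cons, List.not_mem_nil, false_imp_iff, implies_true,
    plane1_isValid, plane2_isValid, plane3_isValid, plane4_isValid, plane5_isValid,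
    plane6_isValid, plane7_isValid, plane8_isValid, plane9_isValid, plane10_isValid,
    plane11_isValid, plane12_isValid, plane13_isValid, plane14_isValid, plane15_isValid,
    plane16_isValid, plane17_isValid, and_self]

/-- The invariants of the designs of the 168 unitals. -/
def unitalCounts : List ℕ :=
  certificates.flatMap Certificate.invariants

theorem length_unitalCounts : unitalCounts.length = 168 := by
  decide +kernel

theorem nodup_unitalCounts : unitalCounts.Nodup := by
  decide +kernel

theorem isUnitalCount_of_mem_unitalCounts {n : ℕ} (hn : n ∈ unitalCounts) : IsUnitalCount n := by
  obtain ⟨C, hC, hn⟩ := List.mem_flatMap.1 hn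
  exact (isValid_of_mem_certificates hC).isUnitalCount hn

/-- There are at least 168 pairwise non-isomorphic `2-(65,5,1)` designs, each of which
is isomorphic to the design associated to a unital in some projective plane of
order 16. -/
theorem at_least_168_unital_designs :
    ∃ D : Fin 168 → Set (Set (Fin 65)),
      (∀ i, IsSteinerDesign65 (D i)) ∧
      (∀ i j, i ≠ j → ¬ DesignIso (D i) (D j)) ∧
      (∀ i, ∃ (Pl : ProjPlane) (U : Set Pl.Point),
        Pl.HasOrder 16 ∧ Pl.IsUnital 4 U ∧ DesignIso (D i) (Pl.unitalBlocks 4 U)) := by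
  have hcount (i : Fin 168) : IsUnitalCount (unitalCounts.get (i.cast length_unitalCounts.symm)) :=
    isUnitalCount_of_mem_unitalCounts (List.get_mem _ _)
  choose Pl U horder hunital hcount using hcount
  choose D hD hDU using fun i => (hunital i).exists_isSteinerDesign65
  refine ⟨D, hD, fun i j hij hiso => hij ?_, fun i => ⟨Pl i, U i, horder i, hunital i, hDU i⟩⟩
  have hcountD (i : Fin 168) : oddTransversalCount (fun x (b : D i) => x ∈ b.1) =
      unitalCounts.get (i.cast length_unitalCounts.symm) :=
    ((hDU i).oddTransversalCount_eq (hD i).isLinearSpace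
      ((hunital i).isLinearSpace four_pos)).trans (hcount i)
  have hij : unitalCounts.get (i.cast length_unitalCounts.symm) =
      unitalCounts.get (j.cast length_unitalCounts.symm) := by
    rw [← hcountD, ← hcountD, hiso.oddTransversalCount_eq (hD i).isLinearSpace (hD j).isLinearSpace]
  exact Fin.cast_injective _ (nodup_unitalCounts.injective_get hij)
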